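/- Suppose the uniform observability condition holds: for every ε > 0 there exists δ > 0 such that for all μ, ν ∈ P(E), ‖Q_μ − Q_ν‖_{TV} < δ implies ‖μ − ν‖ < ε. Then the filter transition kernel Π admits a unique Π-invariant probability measure on P(E). -/

import Mathlib

open MeasureTheory Filter Topology ENNReal

/-- `P(E)`: probability vectors on a countable set `E`, with the topology of
pointwise (equivalently, weak) convergence inherited from `E → ℝ`. -/
abbrev ProbVec (E : Type*) := {p : E → ℝ // (∀ i, 0 ≤ p i) ∧ HasSum p 1}

/-- Row-vector/matrix product `(p M(y))_j = ∑_i p_i M_{ij}(y)`. -/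
noncomputable def rowMul {E F : Type*} (M : F → E → E → ℝ) (p : E → ℝ) (y : F) : E → ℝ :=
  fun j => ∑' i, p i * M y i j

/-- Iterated product `p M(y₁)⋯M(yₙ)` along a list of observations. -/
noncomputable def rowIter {E F : Type*} (M : F → E → E → ℝ) (p : E → ℝ) (ys : List F) : E → ℝ :=
  ys.foldl (rowMul M) p

/-- `p 1 = ∑_j p_j`. -/
noncomputable def rowTot {E : Type*} (p : E → ℝ) : ℝ := ∑' j, p j

/-- One step of the filter: `μ ↦ μM(y)/(μM(y)1)` (junk value `μ` when undefined). -/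
noncomputable def filterStep {E F : Type*} (M : F → E → E → ℝ) (μ : ProbVec E) (y : F) :
    ProbVec E := by
  classical
  exact if h : ∃ ν : ProbVec E, ∀ j,
      (ν : E → ℝ) j * rowTot (rowMul M (μ : E → ℝ) y) = rowMul M (μ : E → ℝ) y j
    then h.choose else μ

/-- The filter `μM(y₁)⋯M(yₙ)/(μM(y₁)⋯M(yₙ)1)` (junk value `μ` when undefined). -/
noncomputable def filterList {E F : Type*} (M : F → E → E → ℝ) (μ : ProbVec E) (ys : List F) :
    ProbVec E := by
  classical
  exact if h : ∃ ν : ProbVec E, ∀ j,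
      (ν : E → ℝ) j * rowTot (rowIter M (μ : E → ℝ) ys) = rowIter M (μ : E → ℝ) ys j
    then h.choose else μ

/-- The filter `π_n^μ(y)` as a function of the observation path `y : ℕ → F`
(the coordinate `y k` represents the observation `y_{k+1}`). -/
noncomputable def filterSeq {E F : Type*} (M : F → E → E → ℝ) (μ : ProbVec E) (y : ℕ → F)
    (n : ℕ) : ProbVec E :=
  filterList M μ (List.ofFn fun k : Fin n => y k)

/-- The filter transition kernel `Π`, acting on functions:
`Πf(μ) = ∫ f(μM(y)/(μM(y)1)) ⬝ (μM(y)1) φ(dy)`. -/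
noncomputable def filterKernel {E F : Type*} [MeasurableSpace F] (M : F → E → E → ℝ)
    (φ : Measure F) (f : ProbVec E → ℝ) (μ : ProbVec E) : ℝ :=
  ∫ y, f (filterStep M μ y) * rowTot (rowMul M (μ : E → ℝ) y) ∂φ

/-- Bounded continuous real functions on `P(E)`. -/
def IsBddCont {E : Type*} (f : ProbVec E → ℝ) : Prop :=
  Continuous f ∧ ∃ C : ℝ, ∀ μ, |f μ| ≤ C

/-- A probability measure `𝕄` on `P(E)` is `Π`-invariant if `∫ Πf d𝕄 = ∫ f d𝕄`
for every bounded continuous `f`. -/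
def IsPiInvariant {E F : Type*} [MeasurableSpace F] (M : F → E → E → ℝ) (φ : Measure F)
    (𝕄 : ProbabilityMeasure (ProbVec E)) : Prop :=
  ∀ f : ProbVec E → ℝ, IsBddCont f →
    ∫ μ, filterKernel M φ f μ ∂(𝕄 : Measure (ProbVec E)) =
      ∫ μ, f μ ∂(𝕄 : Measure (ProbVec E))

/-- The signal transition matrix `P_{ij} = ∫ M_{ij}(y) φ(dy)`. -/
noncomputable def transMat {E F : Type*} [MeasurableSpace F] (M : F → E → E → ℝ)
    (φ : Measure F) : E → E → ℝ :=
  fun i j => ∫ y, M y i j ∂φ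

/-- Powers of a transition matrix on a countable state space. -/
noncomputable def matPow {E : Type*} [DecidableEq E] (P : E → E → ℝ) : ℕ → E → E → ℝ
  | 0 => fun i j => if i = j then 1 else 0
  | n + 1 => fun i j => ∑' k, matPow P n i k * P k j

/-- Total variation (ℓ¹) distance on `P(E)`. -/
noncomputable def tvDist {E : Type*} (p q : ProbVec E) : ℝ :=
  ∑' i, |(p : E → ℝ) i - (q : E → ℝ) i|

/-- Total variation distance `‖P − Q‖ = 2 sup_A |P(A) − Q(A)|` between two measures. -/
noncomputable def tvMeasure {α : Type*} [MeasurableSpace α] (P Q : Measure α) : ℝ≥0∞ :=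
  2 * (⨆ (A : Set α) (_ : MeasurableSet A), ((P A - Q A) + (Q A - P A)))

/-!
Run two unnormalised filters `a ↦ a M(y)` on the same observations. For a pair `(a, b)` let the
prediction gap be `|a|` times the one-sided total variation distance between the laws of the future
observations predicted by the normalised `a` and `b`. If `a ≤ C b`, then the energy `|a|² / |b|` is
the second moment of a likelihood ratio martingale, hence increasing and bounded along the dynamics,
and for every `η` the gap satisfies `η · gap + energy ≤ η² |b| + later energy`. Therefore the
expected gap tends to zero, as in the Blackwell–Dubins theorem. This applies to `e_i ≤ λ_i⁻¹ λ`,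
and by sublinearity of the gap to a random initial distribution with mean `λ` run against `λ`.

Uniform observability turns the gap into an `ℓ¹` distance of filters. Hence, for `f` bounded and
Lipschitz, `∫ Πⁿf dμ - Πⁿf(λ)` tends to zero for every law `μ` on `P(E)` with mean `λ`. Every
invariant law has mean `λ`, which gives uniqueness. For existence, the laws with mean `λ` form a
tight family containing all `Πⁿδ_λ`; a limit point of these is invariant because `Π` preserves the
bounded Lipschitz functions and `Πⁿ⁺¹δ_λ = Πⁿ(Πδ_λ)`, where `Πδ_λ` again has mean `λ`.
-/

open ProbabilityTheory

/-! ### Iterated kernels and products of measures -/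

section Iteration
variable {α F : Type*} [MeasurableSpace α] [MeasurableSpace F]

lemma lintegral_pow_add (κ : Kernel α α) (m n : ℕ) {G : α → ℝ≥0∞} (hG : Measurable G) (a : α) :
    ∫⁻ x, G x ∂(κ ^ (m + n)) a = ∫⁻ x, ∫⁻ x', G x' ∂(κ ^ m) x ∂(κ ^ n) a := by
  rw [Kernel.pow_add, Kernel.lintegral_comp _ _ _ hG]

lemma lintegral_pow_zero (κ : Kernel α α) {G : α → ℝ≥0∞} (hG : Measurable G) (a : α) :
    ∫⁻ x, G x ∂(κ ^ 0) a = G a := by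
  rw [pow_zero]
  exact Kernel.lintegral_id' hG a

lemma lintegral_pow_eq_self {κ : Kernel α α} {G : α → ℝ≥0∞} (hG : Measurable G)
    (hκ : ∀ a, ∫⁻ x, G x ∂κ a = G a) (n : ℕ) (a : α) : ∫⁻ x, G x ∂(κ ^ n) a = G a := by
  induction n generalizing a with
  | zero => exact lintegral_pow_zero κ hG a
  | succ n ih => simp only [lintegral_pow_add κ n 1 hG, ih, pow_one, hκ]

lemma ae_pow_mem {κ : Kernel α α} {S : Set α} (hS : MeasurableSet S)
    (hκ : ∀ a ∈ S, ∀ᵐ x ∂κ a, x ∈ S) {a : α} (ha : a ∈ S) (n : ℕ) : ∀ᵐ x ∂(κ ^ n) a, x ∈ S := by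
  induction n with
  | zero => rw [pow_zero]; exact (ae_dirac_iff hS).2 ha
  | succ n ih =>
    change (κ ^ (n + 1)) a Sᶜ = 0
    rw [Kernel.pow_succ_apply_eq_lintegral κ n a hS.compl,
      lintegral_eq_zero_iff (Kernel.measurable_coe κ hS.compl)]
    filter_upwards [ih] with x hx using hκ x hx

lemma isMarkovKernel_pow (κ : Kernel α α) [IsMarkovKernel κ] (n : ℕ) :
    IsMarkovKernel (κ ^ n) := by
  induction n with
  | zero => exact inferInstanceAs (IsMarkovKernel Kernel.id)
  | succ n ih => exact inferInstanceAs (IsMarkovKernel ((κ ^ n) ∘ₖ κ))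

lemma invariant_pow {κ : Kernel α α} {μ : Measure α} (hμ : κ.Invariant μ) (n : ℕ) :
    (κ ^ n).Invariant μ := by
  induction n with
  | zero => exact Measure.bind_dirac
  | succ n ih => exact ih.comp hμ

lemma lintegral_lintegral_pow_of_invariant {κ : Kernel α α} {μ : Measure α} (hμ : κ.Invariant μ)
    {f : α → ℝ≥0∞} (hf : Measurable f) (n : ℕ) :
    ∫⁻ x, ∫⁻ y, f y ∂(κ ^ n) x ∂μ = ∫⁻ x, f x ∂μ := by
  rw [← Measure.lintegral_bind (κ ^ n).aemeasurable hf.aemeasurable, invariant_pow hμ n]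

lemma lintegral_pi_snoc (φ : Measure F) [SigmaFinite φ] {n : ℕ} {f : (Fin (n + 1) → F) → ℝ≥0∞}
    (hf : Measurable f) :
    ∫⁻ v, f v ∂(Measure.pi fun _ => φ) =
      ∫⁻ v : Fin n → F, ∫⁻ y, f (Fin.snoc v y) ∂φ ∂(Measure.pi fun _ => φ) := by
  have hmp := (measurePreserving_piFinSuccAbove (fun _ : Fin (n + 1) => φ) (Fin.last n)).symm
  rw [← hmp.lintegral_comp hf]
  refine (lintegral_prod_symm' _ (hf.comp hmp.measurable)).trans ?_
  refine lintegral_congr fun v => lintegral_congr fun y => congrArg f ?_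
  exact Fin.insertNth_last' y v

end Iteration

/-! ### Weights and their joint evolution -/

section Weights
variable {ι E : Type*}

/-- Total mass of a weight on `E`. -/
noncomputable def mass (a : E → ℝ≥0∞) : ℝ≥0∞ := ∑' j, a j

/-- The mixture `∑ i, w i • as i` of weights; for a matrix `as` it is the row vector `w` times
`as`. -/
noncomputable def mix (w : ι → ℝ≥0∞) (as : ι → E → ℝ≥0∞) : E → ℝ≥0∞ :=
  fun j => ∑' i, w i * as i j

lemma mass_mono : Monotone (mass : (E → ℝ≥0∞) → ℝ≥0∞) :=
  fun _ _ h => ENNReal.tsum_le_tsum h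

lemma mass_smul (c : ℝ≥0∞) (a : E → ℝ≥0∞) : mass (c • a) = c * mass a := by
  simp only [mass, Pi.smul_apply, smul_eq_mul, ENNReal.tsum_mul_left]

lemma mass_single [DecidableEq E] (i : E) (c : ℝ≥0∞) : mass (Pi.single i c) = c :=
  tsum_pi_single i c

lemma mass_mix (w : ι → ℝ≥0∞) (as : ι → E → ℝ≥0∞) :
    mass (mix w as) = ∑' i, w i * mass (as i) := by
  simp only [mass, mix, ← ENNReal.tsum_mul_left]
  exact ENNReal.tsum_comm

lemma mix_mono (as : ι → E → ℝ≥0∞) : Monotone fun w => mix w as :=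
  fun _ _ h j => ENNReal.tsum_le_tsum fun i => by gcongr; exact h i

lemma mix_smul (c : ℝ≥0∞) (w : ι → ℝ≥0∞) (as : ι → E → ℝ≥0∞) :
    mix (c • w) as = c • mix w as := by
  funext j
  simp only [mix, Pi.smul_apply, smul_eq_mul, ← ENNReal.tsum_mul_left, mul_assoc]

lemma mix_mix {κ : Type*} (w : ι → ℝ≥0∞) (as : ι → κ → ℝ≥0∞) (bs : κ → E → ℝ≥0∞) :
    mix (mix w as) bs = mix w fun i => mix (as i) bs := by
  funext j
  simp only [mix, ← ENNReal.tsum_mul_left, ← ENNReal.tsum_mul_right]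
  rw [ENNReal.tsum_comm]
  simp only [mul_assoc]

lemma mix_single [DecidableEq E] (a : E → ℝ≥0∞) : (mix a fun i => Pi.single i 1) = a := by
  funext j
  simp only [mix, Pi.single_apply, mul_ite, mul_one, mul_zero,
    eq_comm (a := j), tsum_ite_eq]

/-- A pair of weights, evolving under the same observations. -/
abbrev WeightPair (E : Type*) := (E → ℝ≥0∞) × (E → ℝ≥0∞)

variable {F : Type*}

/-- The unnormalised filter `a N(y₁) ⋯ N(yₙ)` along a list of observations. -/
noncomputable def mixList (N : F → E → E → ℝ≥0∞) (a : E → ℝ≥0∞) (ys : List F) : E → ℝ≥0∞ :=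
  ys.foldl (fun b y => mix b (N y)) a

/-- One observation step of a pair of unnormalised filters. -/
noncomputable def pairAct (N : F → E → E → ℝ≥0∞) (p : WeightPair E) (y : F) : WeightPair E :=
  (mix p.1 (N y), mix p.2 (N y))

lemma mixList_append_singleton (N : F → E → E → ℝ≥0∞) (a : E → ℝ≥0∞) (ys : List F) (y : F) :
    mixList N a (ys ++ [y]) = mix (mixList N a ys) (N y) := by
  simp only [mixList, List.foldl_append, List.foldl_cons, List.foldl_nil]

lemma mixList_mix (N : F → E → E → ℝ≥0∞) (w : ι → ℝ≥0∞) (as : ι → E → ℝ≥0∞) (ys : List F) :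
    mixList N (mix w as) ys = mix w fun i => mixList N (as i) ys := by
  induction ys using List.reverseRecOn with
  | nil => rfl
  | append_singleton ys y ih => simp only [mixList_append_singleton, ih, mix_mix]

lemma mixList_smul (N : F → E → E → ℝ≥0∞) (c : ℝ≥0∞) (a : E → ℝ≥0∞) (ys : List F) :
    mixList N (c • a) ys = c • mixList N a ys := by
  induction ys using List.reverseRecOn with
  | nil => rfl
  | append_singleton ys y ih => simp only [mixList_append_singleton, ih, mix_smul]

variable [MeasurableSpace F]

/-- Transition kernel of a pair of unnormalised filters driven by one observation sampled from the
reference measure `φ`; it is not Markov, since the likelihood of the observation is carried by the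
mass of the weights. -/
noncomputable def pairKernel (N : F → E → E → ℝ≥0∞) (φ : Measure F) :
    Kernel (WeightPair E) (WeightPair E) :=
  (Kernel.id ×ₖ Kernel.const _ φ).map fun q => pairAct N q.1 q.2

/-- `N y i j` is the joint density, with respect to `φ(dy)` and counting measure in `j`, of a
transition from the state `i` to the state `j` with observation `y`. -/
structure IsTransitionDensity (N : F → E → E → ℝ≥0∞) (φ : Measure F) : Prop where
  measurable : ∀ i j, Measurable fun y => N y i j
  lintegral_mass : ∀ i, ∫⁻ y, mass (N y i) ∂φ = 1

end Weights

section PairDynamics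
variable {E F : Type*} [Countable E] [MeasurableSpace F]

lemma measurable_mass : Measurable (mass : (E → ℝ≥0∞) → ℝ≥0∞) :=
  Measurable.tsum measurable_pi_apply

lemma measurable_mass_fst : Measurable fun p : WeightPair E => mass p.1 :=
  measurable_mass.comp measurable_fst

lemma measurable_mass_snd : Measurable fun p : WeightPair E => mass p.2 :=
  measurable_mass.comp measurable_snd

lemma lintegral_tsum_mul {ι : Type*} [Countable ι] {φ : Measure F} (w : ι → ℝ≥0∞)
    {f : ι → F → ℝ≥0∞} (hf : ∀ i, Measurable (f i)) :
    ∫⁻ y, ∑' i, w i * f i y ∂φ = ∑' i, w i * ∫⁻ y, f i y ∂φ := by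
  rw [lintegral_tsum fun i => ((hf i).const_mul _).aemeasurable]
  simp only [lintegral_const_mul _ (hf _)]

namespace IsTransitionDensity
variable {N : F → E → E → ℝ≥0∞} {φ : Measure F} (h : IsTransitionDensity N φ)
include h

lemma measurable_mix : Measurable fun q : (E → ℝ≥0∞) × F => mix q.1 (N q.2) :=
  measurable_pi_lambda _ fun j => Measurable.tsum fun i =>
    ((measurable_pi_apply i).comp measurable_fst).mul ((h.measurable i j).comp measurable_snd)

lemma measurable_mix_right (a : E → ℝ≥0∞) : Measurable fun y => mix a (N y) :=
  h.measurable_mix.comp measurable_prodMk_left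

lemma measurable_mass_mix_right (a : E → ℝ≥0∞) : Measurable fun y => mass (mix a (N y)) :=
  measurable_mass.comp (h.measurable_mix_right a)

lemma measurable_pairAct : Measurable fun q : WeightPair E × F => pairAct N q.1 q.2 :=
  (h.measurable_mix.comp (measurable_fst.fst.prodMk measurable_snd)).prodMk
    (h.measurable_mix.comp (measurable_fst.snd.prodMk measurable_snd))

lemma measurable_pairAct_right (p : WeightPair E) : Measurable (pairAct N p) :=
  h.measurable_pairAct.comp measurable_prodMk_left

lemma measurable_mixList (a : E → ℝ≥0∞) (n : ℕ) :
    Measurable fun v : Fin n → F => mixList N a (List.ofFn v) := by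
  induction n with
  | zero => exact measurable_const
  | succ n ih =>
    simp only [List.ofFn_succ', List.concat_eq_append, mixList_append_singleton]
    exact h.measurable_mix.comp ((ih.comp (measurable_pi_lambda _ fun i =>
      measurable_pi_apply i.castSucc)).prodMk (measurable_pi_apply (Fin.last n)))

lemma lintegral_mass_mix (a : E → ℝ≥0∞) : ∫⁻ y, mass (mix a (N y)) ∂φ = mass a := by
  have hm : ∀ i, Measurable fun y => mass (N y i) := fun i =>
    measurable_mass.comp (measurable_pi_lambda _ (h.measurable i))
  simp only [mass_mix, lintegral_tsum_mul a hm, h.lintegral_mass, mul_one]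
  rfl

lemma ae_mass_mix_ne_top {a : E → ℝ≥0∞} (ha : mass a ≠ ∞) : ∀ᵐ y ∂φ, mass (mix a (N y)) ≠ ∞ := by
  have hint : ∫⁻ y, mass (mix a (N y)) ∂φ ≠ ∞ := by rwa [h.lintegral_mass_mix]
  exact (ae_lt_top (h.measurable_mass_mix_right a) hint).mono fun y hy => hy.ne

variable [SigmaFinite φ]

lemma pairKernel_apply (p : WeightPair E) : pairKernel N φ p = φ.map (pairAct N p) := by
  rw [pairKernel, Kernel.map_apply _ h.measurable_pairAct, Kernel.prod_apply, Kernel.id_apply,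
    Kernel.const_apply, Measure.dirac_prod, Measure.map_map h.measurable_pairAct
    measurable_prodMk_left]
  rfl

lemma lintegral_pairKernel {G : WeightPair E → ℝ≥0∞} (hG : Measurable G) (p : WeightPair E) :
    ∫⁻ q, G q ∂pairKernel N φ p = ∫⁻ y, G (pairAct N p y) ∂φ := by
  rw [h.pairKernel_apply, lintegral_map hG (h.measurable_pairAct_right p)]

lemma lintegral_pairKernel_pow {G : WeightPair E → ℝ≥0∞} (hG : Measurable G) (n : ℕ)
    (p : WeightPair E) :
    ∫⁻ q, G q ∂(pairKernel N φ ^ n) p = ∫⁻ v : Fin n → F,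
      G (mixList N p.1 (List.ofFn v), mixList N p.2 (List.ofFn v)) ∂(Measure.pi fun _ => φ) := by
  induction n generalizing G with
  | zero =>
    rw [lintegral_pow_zero _ hG, Measure.pi_of_empty, lintegral_dirac]
    rfl
  | succ n ih =>
    have hmeas : Measurable fun v : Fin (n + 1) → F =>
        G (mixList N p.1 (List.ofFn v), mixList N p.2 (List.ofFn v)) :=
      hG.comp ((h.measurable_mixList p.1 _).prodMk (h.measurable_mixList p.2 _))
    rw [add_comm n 1, lintegral_pow_add _ 1 n hG, pow_one, ih hG.lintegral_kernel, add_comm 1 n,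
      lintegral_pi_snoc φ hmeas]
    simp only [h.lintegral_pairKernel hG, List.ofFn_succ', Fin.snoc_castSucc, Fin.snoc_last,
      List.concat_eq_append, mixList_append_singleton, pairAct]

lemma tsum_mul_lintegral_pairKernel_pow {ι : Type*} [Countable ι] {G : WeightPair E → ℝ≥0∞}
    (hG : Measurable G) (n : ℕ) (w : ι → ℝ≥0∞) (ps : ι → WeightPair E) :
    ∑' i, w i * ∫⁻ q, G q ∂(pairKernel N φ ^ n) (ps i) = ∫⁻ v : Fin n → F, ∑' i, w i *
      G (mixList N (ps i).1 (List.ofFn v), mixList N (ps i).2 (List.ofFn v))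
        ∂(Measure.pi fun _ => φ) := by
  simp only [h.lintegral_pairKernel_pow hG]
  exact (lintegral_tsum_mul w fun i =>
    hG.comp ((h.measurable_mixList _ n).prodMk (h.measurable_mixList _ n))).symm

lemma lintegral_mass_fst_pow (n : ℕ) (p : WeightPair E) :
    ∫⁻ q, mass q.1 ∂(pairKernel N φ ^ n) p = mass p.1 :=
  lintegral_pow_eq_self measurable_mass_fst
    (fun p => (h.lintegral_pairKernel measurable_mass_fst p).trans (h.lintegral_mass_mix p.1)) n p

lemma lintegral_mass_snd_pow (n : ℕ) (p : WeightPair E) :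
    ∫⁻ q, mass q.2 ∂(pairKernel N φ ^ n) p = mass p.2 :=
  lintegral_pow_eq_self measurable_mass_snd
    (fun p => (h.lintegral_pairKernel measurable_mass_snd p).trans (h.lintegral_mass_mix p.2)) n p

lemma ae_dominated_pow {C : ℝ≥0∞} {p : WeightPair E} (hdom : p.1 ≤ C • p.2)
    (hfin : mass p.2 ≠ ∞) (n : ℕ) :
    ∀ᵐ q ∂(pairKernel N φ ^ n) p, q.1 ≤ C • q.2 ∧ mass q.2 ≠ ∞ := by
  have hS : MeasurableSet {q : WeightPair E | q.1 ≤ C • q.2 ∧ mass q.2 ≠ ∞} :=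
    (measurableSet_le measurable_fst (measurable_snd.const_smul C)).inter
      (measurable_mass_snd (measurableSet_singleton ∞).compl)
  refine ae_pow_mem hS (fun q hq => ?_) ⟨hdom, hfin⟩ n
  rw [h.pairKernel_apply]
  refine (ae_map_iff (h.measurable_pairAct_right q).aemeasurable hS).2 ?_
  filter_upwards [h.ae_mass_mix_ne_top hq.2] with y hy
  exact ⟨(mix_mono (N y) hq.1).trans_eq (mix_smul C q.2 (N y)), hy⟩

end IsTransitionDensity
end PairDynamics

/-! ### The prediction gap of a pair of weights -/

section PredictionGap
variable {E F : Type*}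

/-- The amount by which the mass of the first weight exceeds that of the second. -/
noncomputable def massExcess (p : WeightPair E) : ℝ≥0∞ := mass p.1 - mass p.2

/-- The pair whose second weight is rescaled to the mass of the first. -/
noncomputable def rescale (p : WeightPair E) : WeightPair E := (p.1, (mass p.1 / mass p.2) • p.2)

/-- `|a|² / |b|` for the total masses of a pair `(a, b)`: along the dynamics, the second moment
under the law started from `b` of the likelihood ratio of the observations. -/
noncomputable def likelihoodEnergy (p : WeightPair E) : ℝ≥0∞ := mass p.1 ^ 2 / mass p.2

lemma tsum_mul_sub_le {ι : Type*} (w x y : ι → ℝ≥0∞) :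
    ∑' i, w i * x i - ∑' i, w i * y i ≤ ∑' i, w i * (x i - y i) := by
  rw [tsub_le_iff_right, ← ENNReal.tsum_add]
  refine ENNReal.tsum_le_tsum fun i => ?_
  rw [← mul_add]
  gcongr
  exact le_tsub_add

lemma likelihoodEnergy_le {C : ℝ≥0∞} {p : WeightPair E} (hdom : p.1 ≤ C • p.2) :
    likelihoodEnergy p ≤ C ^ 2 * mass p.2 := by
  have hmass : mass p.1 ≤ C * mass p.2 := (mass_mono hdom).trans_eq (mass_smul C p.2)
  refine ENNReal.div_le_of_le_mul ?_
  calc mass p.1 ^ 2 ≤ (C * mass p.2) ^ 2 := by gcongr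
    _ = C ^ 2 * mass p.2 * mass p.2 := by ring

-- In real numbers with `u = x - c` this is `η * u ≤ η ^ 2 + u ^ 2`.
lemma mul_tsub_add_two_mul_le (η x c : ℝ≥0∞) :
    η * (x - c) + 2 * c * x ≤ η ^ 2 + x ^ 2 + c ^ 2 := by
  by_cases htop : η = ∞ ∨ x = ∞ ∨ c = ∞
  · rcases htop with rfl | rfl | rfl <;> simp
  push Not at htop
  lift η to NNReal using htop.1
  lift x to NNReal using htop.2.1
  lift c to NNReal using htop.2.2
  norm_cast
  rw [← NNReal.coe_le_coe]
  push_cast [NNReal.coe_sub_def]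
  rcases le_total (x : ℝ) c with hxc | hcx
  · rw [max_eq_right (by linarith)]
    nlinarith [sq_nonneg ((x : ℝ) - c), sq_nonneg (η : ℝ)]
  · rw [max_eq_left (by linarith)]
    nlinarith [sq_nonneg ((x : ℝ) - c - η), sq_nonneg ((x : ℝ) - c + η)]

lemma mul_massExcess_smul_add_le {C : ℝ≥0∞} {p : WeightPair E} (hdom : p.1 ≤ C • p.2)
    (hfin : mass p.2 ≠ ∞) (η c : ℝ≥0∞) :
    η * massExcess (p.1, c • p.2) + 2 * c * mass p.1 ≤
      η ^ 2 * mass p.2 + likelihoodEnergy p + c ^ 2 * mass p.2 := by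
  set t := mass p.2
  set x := mass p.1 / t with hx
  have hle : mass p.1 ≤ C * t := (mass_mono hdom).trans_eq (mass_smul C p.2)
  have hs : mass p.1 = t * x := by
    rw [mul_comm, ENNReal.div_mul_cancel' (fun h0 => by simpa [h0] using hle)
      (fun htop => absurd htop hfin)]
  have hexcess : massExcess (p.1, c • p.2) = t * (x - c) := by
    rw [massExcess, mass_smul, hs, ENNReal.mul_sub fun _ _ => hfin, mul_comm c]
  have henergy : likelihoodEnergy p = t * x ^ 2 := by
    rw [likelihoodEnergy, sq, mul_div_assoc, ← hx, hs, sq, mul_assoc]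
  calc η * massExcess (p.1, c • p.2) + 2 * c * mass p.1
      = t * (η * (x - c) + 2 * c * x) := by rw [hexcess, hs]; ring
    _ ≤ t * (η ^ 2 + x ^ 2 + c ^ 2) := by gcongr t * ?_; exact mul_tsub_add_two_mul_le η x c
    _ = η ^ 2 * t + likelihoodEnergy p + c ^ 2 * t := by rw [henergy]; ring

lemma massExcess_mix_le {ι : Type*} (w : ι → ℝ≥0∞) (as bs : ι → E → ℝ≥0∞) :
    massExcess (mix w as, mix w bs) ≤ ∑' i, w i * massExcess (as i, bs i) := by
  simp only [massExcess, mass_mix]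
  exact tsum_mul_sub_le w _ _

lemma rescale_mix {ι : Type*} (w : ι → ℝ≥0∞) (as : ι → E → ℝ≥0∞) (b : E → ℝ≥0∞) :
    rescale (mix w as, b) = (mix w as, mix w fun i => (rescale (as i, b)).2) := by
  refine Prod.ext rfl (funext fun j => ?_)
  simp only [rescale, mix, mass_mix, Pi.smul_apply, smul_eq_mul, div_eq_mul_inv,
    ← ENNReal.tsum_mul_right, mul_assoc]

variable [MeasurableSpace F] (N : F → E → E → ℝ≥0∞) (φ : Measure F)

/-- The prediction gap over `m` observations: `|a|` times the one-sided total variation distance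
between the laws of `m` observations started from the normalisations of `a` and `b`. -/
noncomputable def horizonGap (m : ℕ) (p : WeightPair E) : ℝ≥0∞ :=
  ∫⁻ q, massExcess q ∂(pairKernel N φ ^ m) (rescale p)

/-- The prediction gap: `|a|` times the one-sided total variation distance between the laws of the
infinite observation sequences started from the normalisations of `a` and `b`. -/
noncomputable def predictionGap (p : WeightPair E) : ℝ≥0∞ := ⨆ m, horizonGap N φ m p

variable {N φ} [Countable E]

lemma measurable_massExcess : Measurable (massExcess : WeightPair E → ℝ≥0∞) :=
  measurable_mass_fst.sub measurable_mass_snd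

lemma measurable_massExcess_smul (c : ℝ≥0∞) :
    Measurable fun q : WeightPair E => massExcess (q.1, c • q.2) :=
  measurable_massExcess.comp (by fun_prop)

lemma measurable_rescale : Measurable (rescale : WeightPair E → WeightPair E) :=
  measurable_fst.prodMk (measurable_pi_lambda _ fun j =>
    (measurable_mass_fst.div measurable_mass_snd).mul ((measurable_pi_apply j).comp measurable_snd))

lemma measurable_likelihoodEnergy : Measurable (likelihoodEnergy : WeightPair E → ℝ≥0∞) :=
  (measurable_mass_fst.pow_const 2).div measurable_mass_snd

lemma measurable_horizonGap (m : ℕ) : Measurable (horizonGap N φ m) :=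
  measurable_massExcess.lintegral_kernel.comp measurable_rescale

lemma measurable_predictionGap : Measurable (predictionGap N φ) :=
  Measurable.iSup measurable_horizonGap

namespace IsTransitionDensity
variable [SigmaFinite φ] (h : IsTransitionDensity N φ)
include h

lemma massExcess_le_lintegral (p : WeightPair E) :
    massExcess p ≤ ∫⁻ q, massExcess q ∂pairKernel N φ p := by
  rw [h.lintegral_pairKernel measurable_massExcess]
  calc massExcess p
      = ∫⁻ y, mass (mix p.1 (N y)) ∂φ - ∫⁻ y, mass (mix p.2 (N y)) ∂φ := by
        rw [h.lintegral_mass_mix, h.lintegral_mass_mix, massExcess]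
    _ ≤ ∫⁻ y, massExcess (pairAct N p y) ∂φ :=
        lintegral_sub_le _ _ (h.measurable_mass_mix_right p.2)

lemma horizonGap_monotone : Monotone (horizonGap N φ) := by
  refine monotone_nat_of_le_succ fun m p => ?_
  rw [horizonGap, horizonGap, add_comm m 1, lintegral_pow_add _ 1 m measurable_massExcess, pow_one]
  exact lintegral_mono h.massExcess_le_lintegral

lemma horizonGap_le (m : ℕ) (p : WeightPair E) : horizonGap N φ m p ≤ mass p.1 :=
  (lintegral_mono fun _ => tsub_le_self).trans_eq (h.lintegral_mass_fst_pow m (rescale p))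

lemma predictionGap_le (p : WeightPair E) : predictionGap N φ p ≤ mass p.1 :=
  iSup_le fun m => h.horizonGap_le m p

lemma horizonGap_mix_le {ι : Type*} [Countable ι] (m : ℕ) (w : ι → ℝ≥0∞) (as : ι → E → ℝ≥0∞)
    (b : E → ℝ≥0∞) : horizonGap N φ m (mix w as, b) ≤ ∑' i, w i * horizonGap N φ m (as i, b) := by
  simp only [horizonGap]
  rw [h.tsum_mul_lintegral_pairKernel_pow measurable_massExcess, rescale_mix,
    h.lintegral_pairKernel_pow measurable_massExcess]
  refine lintegral_mono fun v => ?_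
  simp only [mixList_mix]
  exact massExcess_mix_le w _ _

lemma predictionGap_mix_le {ι : Type*} [Countable ι] (w : ι → ℝ≥0∞) (as : ι → E → ℝ≥0∞)
    (b : E → ℝ≥0∞) : predictionGap N φ (mix w as, b) ≤ ∑' i, w i * predictionGap N φ (as i, b) := by
  refine iSup_le fun m => (h.horizonGap_mix_le m w as b).trans (ENNReal.tsum_le_tsum fun i => ?_)
  gcongr
  exact le_iSup (fun m => horizonGap N φ m (as i, b)) m

lemma lintegral_predictionGap_mix_le {ι : Type*} [Countable ι] (n : ℕ) (w : ι → ℝ≥0∞)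
    (as : ι → E → ℝ≥0∞) (b : E → ℝ≥0∞) :
    ∫⁻ q, predictionGap N φ q ∂(pairKernel N φ ^ n) (mix w as, b) ≤
      ∑' i, w i * ∫⁻ q, predictionGap N φ q ∂(pairKernel N φ ^ n) (as i, b) := by
  rw [h.tsum_mul_lintegral_pairKernel_pow measurable_predictionGap,
    h.lintegral_pairKernel_pow measurable_predictionGap]
  refine lintegral_mono fun v => ?_
  simp only [mixList_mix]
  exact h.predictionGap_mix_le w _ _

lemma horizonGap_eq_lintegral (m : ℕ) (p : WeightPair E) :
    horizonGap N φ m p = ∫⁻ q, massExcess (q.1, (mass p.1 / mass p.2) • q.2)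
      ∂(pairKernel N φ ^ m) p := by
  rw [horizonGap, h.lintegral_pairKernel_pow measurable_massExcess,
    h.lintegral_pairKernel_pow (measurable_massExcess_smul _)]
  simp only [rescale, mixList_smul]

-- Optimising over `η` gives `horizonGap ^ 2 ≤ 4 * mass p.2 * (increase of the energy)`.
lemma mul_horizonGap_add_likelihoodEnergy_le {C : ℝ≥0∞} (hC : C ≠ ∞) {p : WeightPair E}
    (hdom : p.1 ≤ C • p.2) (hfin : mass p.2 ≠ ∞) (η : ℝ≥0∞) (m : ℕ) :
    η * horizonGap N φ m p + likelihoodEnergy p ≤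
      η ^ 2 * mass p.2 + ∫⁻ q, likelihoodEnergy q ∂(pairKernel N φ ^ m) p := by
  set c := mass p.1 / mass p.2 with hc
  set V := likelihoodEnergy p with hV
  have hle : mass p.1 ≤ C * mass p.2 := (mass_mono hdom).trans_eq (mass_smul C p.2)
  have hcp : c * mass p.2 = mass p.1 :=
    ENNReal.div_mul_cancel' (fun h0 => by simpa [h0] using hle) fun htop => absurd htop hfin
  have hVc : V = c * mass p.1 := by
    rw [hV, likelihoodEnergy, sq, mul_div_assoc, ← hc, mul_comm]
  have hVfin : V ≠ ∞ := ne_top_of_le_ne_top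
    (ENNReal.mul_ne_top (ENNReal.pow_ne_top hC) hfin) (likelihoodEnergy_le hdom)
  have hint := lintegral_mono_ae ((h.ae_dominated_pow hdom hfin m).mono fun q hq =>
    mul_massExcess_smul_add_le hq.1 hq.2 η c)
  rw [lintegral_add_right _ (measurable_mass_fst.const_mul _),
    lintegral_add_right _ (measurable_mass_snd.const_mul _),
    lintegral_add_right _ measurable_likelihoodEnergy,
    lintegral_const_mul _ (measurable_massExcess_smul c), lintegral_const_mul _ measurable_mass_fst,
    lintegral_const_mul _ measurable_mass_snd, lintegral_const_mul _ measurable_mass_snd,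
    h.lintegral_mass_fst_pow, h.lintegral_mass_snd_pow, ← h.horizonGap_eq_lintegral] at hint
  refine (ENNReal.add_le_add_iff_right hVfin).1 (le_of_eq_of_le ?_ (hint.trans_eq ?_))
  · rw [hVc]; ring
  · rw [hVc, ← hcp]; ring

lemma lintegral_likelihoodEnergy_le {C : ℝ≥0∞} {p : WeightPair E} (hdom : p.1 ≤ C • p.2)
    (hfin : mass p.2 ≠ ∞) (n : ℕ) :
    ∫⁻ q, likelihoodEnergy q ∂(pairKernel N φ ^ n) p ≤ C ^ 2 * mass p.2 := by
  rw [← h.lintegral_mass_snd_pow n p, ← lintegral_const_mul _ measurable_mass_snd]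
  exact lintegral_mono_ae
    ((h.ae_dominated_pow hdom hfin n).mono fun q hq => likelihoodEnergy_le hq.1)

lemma mul_lintegral_horizonGap_add_le {C : ℝ≥0∞} (hC : C ≠ ∞) {p : WeightPair E}
    (hdom : p.1 ≤ C • p.2) (hfin : mass p.2 ≠ ∞) (η : ℝ≥0∞) (m n : ℕ) :
    η * ∫⁻ q, horizonGap N φ m q ∂(pairKernel N φ ^ n) p
        + ∫⁻ q, likelihoodEnergy q ∂(pairKernel N φ ^ n) p ≤
      η ^ 2 * mass p.2 + ∫⁻ q, likelihoodEnergy q ∂(pairKernel N φ ^ (m + n)) p := by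
  have hint := lintegral_mono_ae ((h.ae_dominated_pow hdom hfin n).mono fun q hq =>
    h.mul_horizonGap_add_likelihoodEnergy_le hC hq.1 hq.2 η m)
  rwa [lintegral_add_right _ measurable_likelihoodEnergy,
    lintegral_const_mul _ (measurable_horizonGap m),
    lintegral_add_left (measurable_mass_snd.const_mul _),
    lintegral_const_mul _ measurable_mass_snd, h.lintegral_mass_snd_pow,
    ← lintegral_pow_add _ m n measurable_likelihoodEnergy] at hint

lemma mul_lintegral_predictionGap_add_le {C : ℝ≥0∞} (hC : C ≠ ∞) {p : WeightPair E}
    (hdom : p.1 ≤ C • p.2) (hfin : mass p.2 ≠ ∞) (η : ℝ≥0∞) (n : ℕ) :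
    η * ∫⁻ q, predictionGap N φ q ∂(pairKernel N φ ^ n) p
        + ∫⁻ q, likelihoodEnergy q ∂(pairKernel N φ ^ n) p ≤
      η ^ 2 * mass p.2 + ⨆ k, ∫⁻ q, likelihoodEnergy q ∂(pairKernel N φ ^ k) p := by
  simp only [predictionGap]
  rw [lintegral_iSup measurable_horizonGap h.horizonGap_monotone, ENNReal.mul_iSup,
    ENNReal.iSup_add]
  refine iSup_le fun m => (h.mul_lintegral_horizonGap_add_le hC hdom hfin η m n).trans ?_
  gcongr
  exact le_iSup (fun k => ∫⁻ q, likelihoodEnergy q ∂(pairKernel N φ ^ k) p) (m + n)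

lemma lintegral_likelihoodEnergy_monotone {C : ℝ≥0∞} (hC : C ≠ ∞) {p : WeightPair E}
    (hdom : p.1 ≤ C • p.2) (hfin : mass p.2 ≠ ∞) :
    Monotone fun n => ∫⁻ q, likelihoodEnergy q ∂(pairKernel N φ ^ n) p :=
  monotone_nat_of_le_succ fun n => by
    simpa [add_comm] using h.mul_lintegral_horizonGap_add_le hC hdom hfin 0 1 n

end IsTransitionDensity

lemma tendsto_zero_of_forall_mul_add_le {g A : ℕ → ℝ≥0∞} {C : ℝ≥0∞} (hC : C ≠ ∞)
    (hmono : Monotone A) (hbdd : ⨆ n, A n ≠ ∞) (hle : ∀ η n, η * g n + A n ≤ η ^ 2 * C + ⨆ n, A n) :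
    Tendsto g atTop (𝓝 0) := by
  refine ENNReal.tendsto_nhds_zero.2 fun ε hε => ?_
  rcases eq_or_ne ε ∞ with rfl | hε'
  · exact Eventually.of_forall fun _ => le_top
  have hC1 : C + 1 ≠ ∞ := ENNReal.add_ne_top.2 ⟨hC, ENNReal.one_ne_top⟩
  set η := ε / (C + 1)
  have hη0 : η ≠ 0 := ENNReal.div_ne_zero.2 ⟨hε.ne', hC1⟩
  have hη : η ≠ ∞ := ENNReal.div_ne_top hε' (by simp)
  have hev : ∀ᶠ n in atTop, ⨆ n, A n ≤ A n + η ^ 2 :=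
    ((tendsto_atTop_iSup hmono).add_const (η ^ 2)).eventually_const_le
      (ENNReal.lt_add_right hbdd (pow_ne_zero 2 hη0))
  filter_upwards [hev] with n hn
  have hAn : A n ≠ ∞ := ne_top_of_le_ne_top hbdd (le_iSup A n)
  have hmul : η * g n + A n ≤ η * ε + A n := by
    calc η * g n + A n ≤ η ^ 2 * C + (A n + η ^ 2) := (hle η n).trans (by gcongr)
      _ = η * (η * (C + 1)) + A n := by ring
      _ = η * ε + A n := by rw [ENNReal.div_mul_cancel (by simp) hC1]
  exact (ENNReal.mul_le_mul_iff_right hη0 hη).1 ((ENNReal.add_le_add_iff_right hAn).1 hmul)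

lemma tendsto_tsum_zero_of_le {ι : Type*} {f : ℕ → ι → ℝ≥0∞} {b : ι → ℝ≥0∞} (hb : ∑' i, b i ≠ ∞)
    (hfb : ∀ n i, f n i ≤ b i) (hf : ∀ i, Tendsto (fun n => f n i) atTop (𝓝 0)) :
    Tendsto (fun n => ∑' i, f n i) atTop (𝓝 0) := by
  let _ : MeasurableSpace ι := ⊤
  simpa [lintegral_count] using
    tendsto_lintegral_of_dominated_convergence (μ := Measure.count) b
      (fun n => measurable_from_top) (fun n => Eventually.of_forall (hfb n))
      (by rwa [lintegral_count]) (Eventually.of_forall hf)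

namespace IsTransitionDensity
variable [SigmaFinite φ] (h : IsTransitionDensity N φ)
include h

-- The one-sided form of the Blackwell–Dubins merging of opinions.
lemma tendsto_lintegral_predictionGap {C : ℝ≥0∞} (hC : C ≠ ∞) {p : WeightPair E}
    (hdom : p.1 ≤ C • p.2) (hfin : mass p.2 ≠ ∞) :
    Tendsto (fun n => ∫⁻ q, predictionGap N φ q ∂(pairKernel N φ ^ n) p) atTop (𝓝 0) :=
  tendsto_zero_of_forall_mul_add_le hfin (h.lintegral_likelihoodEnergy_monotone hC hdom hfin)
    (ne_top_of_le_ne_top (ENNReal.mul_ne_top (ENNReal.pow_ne_top hC) hfin)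
      (iSup_le (h.lintegral_likelihoodEnergy_le hdom hfin)))
    (h.mul_lintegral_predictionGap_add_le hC hdom hfin)

lemma tendsto_tsum_lintegral_predictionGap [DecidableEq E] {l : E → ℝ≥0∞} (hl : mass l ≠ ∞) :
    Tendsto (fun n => ∑' i, l i *
      ∫⁻ q, predictionGap N φ q ∂(pairKernel N φ ^ n) (Pi.single i 1, l)) atTop (𝓝 0) := by
  refine tendsto_tsum_zero_of_le hl (fun n i => ?_) fun i => ?_
  · refine mul_le_of_le_one_right' ?_
    calc ∫⁻ q, predictionGap N φ q ∂(pairKernel N φ ^ n) (Pi.single i 1, l)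
        ≤ ∫⁻ q, mass q.1 ∂(pairKernel N φ ^ n) (Pi.single i 1, l) :=
          lintegral_mono h.predictionGap_le
      _ = 1 := by rw [h.lintegral_mass_fst_pow, mass_single]
  · rcases eq_or_ne (l i) 0 with h0 | h0
    · simp only [h0, zero_mul, tendsto_const_nhds_iff]
    have hli : l i ≠ ∞ := ENNReal.ne_top_of_tsum_ne_top hl i
    have hdom : Pi.single i 1 ≤ (l i)⁻¹ • l := by
      refine update_le_iff.2 ⟨?_, fun j _ => zero_le⟩
      exact (ENNReal.inv_mul_cancel h0 hli).ge
    simpa using ENNReal.Tendsto.const_mul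
      (h.tendsto_lintegral_predictionGap (ENNReal.inv_ne_top.2 h0) hdom hl) (Or.inr hli)

end IsTransitionDensity
end PredictionGap

/-! ### Normalised filters -/

section Normalization
variable {E : Type*}

/-- The `ℓ¹` distance between two weights. -/
noncomputable def l1Dist (a b : E → ℝ≥0∞) : ℝ≥0∞ := mass (a - b) + mass (b - a)

lemma l1Dist_comm (a b : E → ℝ≥0∞) : l1Dist a b = l1Dist b a := add_comm _ _

lemma l1Dist_le_mass_add (a b : E → ℝ≥0∞) : l1Dist a b ≤ mass a + mass b :=
  add_le_add (mass_mono fun _ => tsub_le_self) (mass_mono fun _ => tsub_le_self)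

lemma l1Dist_smul {c : ℝ≥0∞} (hc : c ≠ ∞) (a b : E → ℝ≥0∞) :
    l1Dist (c • a) (c • b) = c * l1Dist a b := by
  have hsub : ∀ a b : E → ℝ≥0∞, c • a - c • b = c • (a - b) := fun a b =>
    funext fun _ => (ENNReal.mul_sub fun _ _ => hc).symm
  rw [l1Dist, hsub, hsub, mass_smul, mass_smul, ← mul_add, l1Dist]

lemma l1Dist_triangle (a b c : E → ℝ≥0∞) : l1Dist a c ≤ l1Dist a b + l1Dist b c := by
  have hsub : ∀ a b c : E → ℝ≥0∞, mass (a - c) ≤ mass (a - b) + mass (b - c) := fun a b c => by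
    rw [mass, mass, mass, ← ENNReal.tsum_add]
    exact ENNReal.tsum_le_tsum fun _ => tsub_le_tsub_add_tsub
  calc mass (a - c) + mass (c - a)
      ≤ (mass (a - b) + mass (b - c)) + (mass (c - b) + mass (b - a)) :=
        add_le_add (hsub a b c) (hsub c b a)
    _ = l1Dist a b + l1Dist b c := by simp only [l1Dist]; ring

lemma mass_sub_le (a b : E → ℝ≥0∞) : mass a - mass b ≤ mass (a - b) := by
  rw [tsub_le_iff_left, mass, mass, mass, ← ENNReal.tsum_add]
  exact ENNReal.tsum_le_tsum fun _ => le_add_tsub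

lemma mass_le_add_l1Dist (a b : E → ℝ≥0∞) : mass a ≤ mass b + l1Dist a b :=
  tsub_le_iff_left.1 ((mass_sub_le a b).trans le_self_add)

lemma l1Dist_smul_smul {c c' : ℝ≥0∞} {a : E → ℝ≥0∞} (ha : ∀ i, a i ≠ ∞) :
    l1Dist (c • a) (c' • a) = (c - c') * mass a + (c' - c) * mass a := by
  have hsub : ∀ c c' : ℝ≥0∞, c • a - c' • a = (c - c') • a := fun c c' =>
    funext fun i => (ENNReal.sub_mul fun _ _ => ha i).symm
  rw [l1Dist, hsub, hsub, mass_smul, mass_smul]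

/-- A probability vector as an extended nonnegative weight. -/
noncomputable def ProbVec.weight (α : ProbVec E) : E → ℝ≥0∞ := fun i => ENNReal.ofReal (α.1 i)

lemma ProbVec.mass_weight (α : ProbVec E) : mass α.weight = 1 := by
  rw [mass, ← ENNReal.ofReal_one, ← α.2.2.tsum_eq,
    ENNReal.ofReal_tsum_of_nonneg α.2.1 α.2.2.summable]
  rfl

lemma ProbVec.mass_weight_ne_top (α : ProbVec E) : mass α.weight ≠ ∞ :=
  α.mass_weight.trans_ne one_ne_top

lemma ProbVec.toReal_weight (α : ProbVec E) (i : E) : (α.weight i).toReal = α.1 i :=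
  ENNReal.toReal_ofReal (α.2.1 i)

lemma ProbVec.weight_injective : Function.Injective (ProbVec.weight : ProbVec E → E → ℝ≥0∞) :=
  fun α β hαβ => Subtype.ext <| funext fun i => by
    rw [← α.toReal_weight, hαβ, β.toReal_weight]

lemma ProbVec.ofReal_tvDist (α β : ProbVec E) :
    ENNReal.ofReal (tvDist α β) = l1Dist α.weight β.weight := by
  rw [tvDist, ENNReal.ofReal_tsum_of_nonneg (fun _ => abs_nonneg _)
    (α.2.2.summable.sub β.2.2.summable).abs, l1Dist, mass, mass, ← ENNReal.tsum_add]
  refine tsum_congr fun i => ?_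
  simp only [Pi.sub_apply, weight, ← ENNReal.ofReal_sub _ (α.2.1 i),
    ← ENNReal.ofReal_sub _ (β.2.1 i)]
  rcases le_total (α.1 i) (β.1 i) with hi | hi
  · rw [abs_of_nonpos (sub_nonpos.2 hi), ENNReal.ofReal_of_nonpos (sub_nonpos.2 hi), zero_add,
      neg_sub]
  · rw [abs_of_nonneg (sub_nonneg.2 hi), ENNReal.ofReal_of_nonpos (sub_nonpos.2 hi), add_zero]

lemma ProbVec.l1Dist_weight_le_two (α β : ProbVec E) : l1Dist α.weight β.weight ≤ 2 := by
  refine (l1Dist_le_mass_add _ _).trans_eq ?_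
  rw [α.mass_weight, β.mass_weight, one_add_one_eq_two]

lemma hasSum_toReal_div_mass {a : E → ℝ≥0∞} (ha : mass a ≠ 0 ∧ mass a ≠ ∞) :
    HasSum (fun i => (a i / mass a).toReal) 1 := by
  have hsum : ∑' i, a i / mass a = 1 := by
    simp only [div_eq_mul_inv, ENNReal.tsum_mul_right]
    exact ENNReal.mul_inv_cancel ha.1 ha.2
  have hne : ∑' i, a i / mass a ≠ ∞ := by rw [hsum]; exact one_ne_top
  have hreal := ENNReal.hasSum_toReal hne
  rwa [← ENNReal.tsum_toReal_eq (ENNReal.ne_top_of_tsum_ne_top hne), hsum, toReal_one] at hreal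

lemma measurable_weight : Measurable (ProbVec.weight : ProbVec E → E → ℝ≥0∞) :=
  measurable_pi_lambda _ fun i =>
    ENNReal.measurable_ofReal.comp ((measurable_pi_apply i).comp measurable_subtype_coe)

lemma measurable_weight_apply (i : E) : Measurable fun α : ProbVec E => α.weight i :=
  (measurable_pi_apply i).comp measurable_weight

variable [Nonempty (ProbVec E)]

open Classical in
/-- The probability vector `a / |a|`; an arbitrary one if the mass of `a` is `0` or infinite. -/
noncomputable def toProbVec (a : E → ℝ≥0∞) : ProbVec E :=
  if ha : mass a ≠ 0 ∧ mass a ≠ ∞ then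
    ⟨fun i => (a i / mass a).toReal, fun _ => toReal_nonneg, hasSum_toReal_div_mass ha⟩
  else Classical.arbitrary _

lemma mass_smul_weight_toProbVec {a : E → ℝ≥0∞} (ha : mass a ≠ ∞) :
    mass a • (toProbVec a).weight = a := by
  funext i
  rcases eq_or_ne (mass a) 0 with h0 | h0
  · rw [Pi.smul_apply, h0, zero_smul, ENNReal.tsum_eq_zero.1 h0 i]
  · have hi : a i / mass a ≠ ∞ :=
      ENNReal.div_ne_top (ENNReal.ne_top_of_tsum_ne_top ha i) h0
    simp only [toProbVec, dif_pos (And.intro h0 ha), Pi.smul_apply, ProbVec.weight,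
      ENNReal.ofReal_toReal hi, smul_eq_mul]
    exact ENNReal.mul_div_cancel h0 ha

lemma weight_toProbVec_of_mass_eq_one {a : E → ℝ≥0∞} (ha : mass a = 1) :
    (toProbVec a).weight = a := by
  rw [← one_smul ℝ≥0∞ (toProbVec a).weight, ← ha]
  exact mass_smul_weight_toProbVec (ha.trans_ne one_ne_top)

lemma toProbVec_weight (α : ProbVec E) : toProbVec α.weight = α :=
  ProbVec.weight_injective (weight_toProbVec_of_mass_eq_one α.mass_weight)

lemma toProbVec_smul {c : ℝ≥0∞} (hc : c ≠ 0) (hc' : c ≠ ∞) (a : E → ℝ≥0∞) :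
    toProbVec (c • a) = toProbVec a := by
  have hiff : (mass (c • a) ≠ 0 ∧ mass (c • a) ≠ ∞) ↔ (mass a ≠ 0 ∧ mass a ≠ ∞) := by
    rw [mass_smul]
    simp [ENNReal.mul_eq_top, hc, hc']
  by_cases ha : mass a ≠ 0 ∧ mass a ≠ ∞
  · rw [toProbVec, toProbVec, dif_pos ha, dif_pos (hiff.2 ha)]
    simp only [mass_smul, Pi.smul_apply, smul_eq_mul, ENNReal.mul_div_mul_left _ _ hc hc']
  · rw [toProbVec, toProbVec, dif_neg ha, dif_neg (mt hiff.1 ha)]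

/-- The extension of a function of probability vectors to a homogeneous function of weights. -/
noncomputable def perspective (f : ProbVec E → ℝ≥0∞) (a : E → ℝ≥0∞) : ℝ≥0∞ :=
  f (toProbVec a) * mass a

lemma perspective_smul (f : ProbVec E → ℝ≥0∞) {c : ℝ≥0∞} (hc : c ≠ ∞) (a : E → ℝ≥0∞) :
    perspective f (c • a) = c * perspective f a := by
  rcases eq_or_ne c 0 with rfl | h0
  · rw [perspective, mass_smul, zero_mul, mul_zero, zero_mul]
  · rw [perspective, toProbVec_smul h0 hc, mass_smul, mul_left_comm, perspective]

lemma perspective_weight (f : ProbVec E → ℝ≥0∞) (α : ProbVec E) : perspective f α.weight = f α := by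
  rw [perspective, toProbVec_weight, α.mass_weight, mul_one]

lemma perspective_coordinate (j : E) {a : E → ℝ≥0∞} (ha : mass a ≠ ∞) :
    perspective (fun α => α.weight j) a = a j := by
  rw [perspective, mul_comm]
  exact congrFun (mass_smul_weight_toProbVec ha) j

variable [Countable E]

lemma measurable_toProbVec : Measurable (toProbVec : (E → ℝ≥0∞) → ProbVec E) := by
  classical
  have hS : MeasurableSet {a : E → ℝ≥0∞ | mass a ≠ 0 ∧ mass a ≠ ∞} :=
    (measurable_mass (measurableSet_singleton 0).compl).inter
      (measurable_mass (measurableSet_singleton ∞).compl)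
  refine Measurable.subtype_mk (f := fun a => (toProbVec a).1) (measurable_pi_lambda _ fun i => ?_)
  have hcoord : (fun a : E → ℝ≥0∞ => (toProbVec a).1 i) = fun a =>
      if mass a ≠ 0 ∧ mass a ≠ ∞ then (a i / mass a).toReal
      else (Classical.arbitrary (ProbVec E)).1 i := by
    funext a
    by_cases ha : mass a ≠ 0 ∧ mass a ≠ ∞
    · simp only [toProbVec, dif_pos ha, if_pos ha]
    · simp only [toProbVec, dif_neg ha, if_neg ha]
  rw [hcoord]
  exact Measurable.ite hS ((measurable_pi_apply i).div measurable_mass).ennreal_toReal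
    measurable_const

lemma measurable_perspective {f : ProbVec E → ℝ≥0∞} (hf : Measurable f) :
    Measurable (perspective f) :=
  (hf.comp measurable_toProbVec).mul measurable_mass

lemma measurable_perspective_fst {f : ProbVec E → ℝ≥0∞} (hf : Measurable f) :
    Measurable fun q : WeightPair E => perspective f q.1 :=
  (measurable_perspective hf).comp measurable_fst

end Normalization

/-! ### Merging of filters -/

section Merging
variable {E F : Type*} [MeasurableSpace F]

/-- The law of the next observation given that the current filter is `α`. -/
noncomputable def predictiveKernel (N : F → E → E → ℝ≥0∞) (φ : Measure F) [SFinite φ] :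
    Kernel (ProbVec E) F :=
  (Kernel.const _ φ).withDensity fun α y => mass (mix α.weight (N y))

/-- The filter transition kernel `Π` as a kernel of measures. -/
noncomputable def filterTransition [Nonempty (ProbVec E)] (N : F → E → E → ℝ≥0∞) (φ : Measure F)
    [SFinite φ] : Kernel (ProbVec E) (ProbVec E) :=
  (Kernel.id ×ₖ predictiveKernel N φ).map fun q => toProbVec (mix q.1.weight (N q.2))

/-- The `ℓ¹` distance of the normalised filters of a pair `(a, b)`, times the mass of `a`. -/
noncomputable def filterGap [Nonempty (ProbVec E)] (p : WeightPair E) : ℝ≥0∞ :=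
  l1Dist (toProbVec p.1).weight (toProbVec p.2).weight * mass p.1

/-- Uniform observability, in homogeneous form: filters are close when the laws of the future
observations they predict are. -/
def PredictionControlsFilter [Nonempty (ProbVec E)] (N : F → E → E → ℝ≥0∞) (φ : Measure F) :
    Prop :=
  ∀ ε ≠ 0, ∃ C ≠ ∞, ∀ p : WeightPair E, mass p.1 ≠ ∞ → mass p.2 ≠ ∞ →
    filterGap p ≤ ε * mass p.1 + C * predictionGap N φ p

/-- `lam` is the mean of the random probability vector of law `μ`. -/
def HasBarycenter (μ : Measure (ProbVec E)) (lam : ProbVec E) : Prop :=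
  ∀ i, ∫⁻ α, α.weight i ∂μ = lam.weight i

/-- Functions with values in `[0, 1]` that are `L`-Lipschitz for the `ℓ¹` distance. -/
structure IsBoundedLipschitz (L : ℝ≥0∞) (f : ProbVec E → ℝ≥0∞) : Prop where
  le_one : ∀ α, f α ≤ 1
  le_add : ∀ α β, f α ≤ f β + L * l1Dist α.weight β.weight

lemma HasBarycenter.lintegral_tsum [Countable E] {μ : Measure (ProbVec E)} {lam : ProbVec E}
    (hμ : HasBarycenter μ lam) (c : E → ℝ≥0∞) :
    ∫⁻ α, ∑' i, α.weight i * c i ∂μ = ∑' i, lam.weight i * c i := by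
  rw [MeasureTheory.lintegral_tsum fun i => ((measurable_weight_apply i).mul_const _).aemeasurable]
  simp only [lintegral_mul_const _ (measurable_weight_apply _), hμ _]

namespace IsTransitionDensity
variable [Countable E] {N : F → E → E → ℝ≥0∞} {φ : Measure F} (h : IsTransitionDensity N φ)
include h

lemma measurable_mix_weight : Measurable fun q : ProbVec E × F => mix q.1.weight (N q.2) :=
  h.measurable_mix.comp ((measurable_weight.comp measurable_fst).prodMk measurable_snd)

variable [SigmaFinite φ]

lemma predictiveKernel_apply (α : ProbVec E) :
    predictiveKernel N φ α = φ.withDensity fun y => mass (mix α.weight (N y)) := by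
  have hmass : Measurable (Function.uncurry fun (α : ProbVec E) y => mass (mix α.weight (N y))) :=
    measurable_mass.comp h.measurable_mix_weight
  rw [predictiveKernel, Kernel.withDensity_apply _ hmass, Kernel.const_apply]

lemma isMarkovKernel_predictiveKernel : IsMarkovKernel (predictiveKernel N φ) := by
  refine ⟨fun α => ⟨?_⟩⟩
  rw [h.predictiveKernel_apply, withDensity_apply _ MeasurableSet.univ, Measure.restrict_univ,
    h.lintegral_mass_mix, α.mass_weight]

end IsTransitionDensity

variable [Nonempty (ProbVec E)]

/-- The mean `ℓ¹` distance after `n` observations between the filter started from the `μ`-random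
probability vector and the one started from `lam`. -/
noncomputable def meanFilterGap (N : F → E → E → ℝ≥0∞) (φ : Measure F) (μ : Measure (ProbVec E))
    (lam : ProbVec E) (n : ℕ) : ℝ≥0∞ :=
  ∫⁻ α, ∫⁻ q, filterGap q ∂(pairKernel N φ ^ n) (α.weight, lam.weight) ∂μ

lemma IsBoundedLipschitz.mul_mass_le {L : ℝ≥0∞} {f : ProbVec E → ℝ≥0∞}
    (hf : IsBoundedLipschitz L f) (p : WeightPair E) :
    perspective f p.1 ≤ f (toProbVec p.2) * mass p.1 + L * filterGap p ∧
      f (toProbVec p.2) * mass p.1 ≤ perspective f p.1 + L * filterGap p := by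
  simp only [perspective, filterGap, ← mul_assoc, ← add_mul]
  refine ⟨?_, ?_⟩ <;> gcongr
  · exact hf.le_add _ _
  · rw [l1Dist_comm]
    exact hf.le_add _ _

variable [Countable E]

lemma measurable_filterGap : Measurable (filterGap : WeightPair E → ℝ≥0∞) := by
  have hweight : ∀ i, Measurable fun a : E → ℝ≥0∞ => (toProbVec a).weight i := fun i =>
    (measurable_weight_apply i).comp measurable_toProbVec
  have hsub : ∀ i, Measurable fun p : WeightPair E => (toProbVec p.1).weight i :=
    fun i => (hweight i).comp measurable_fst
  have hsub' : ∀ i, Measurable fun p : WeightPair E => (toProbVec p.2).weight i :=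
    fun i => (hweight i).comp measurable_snd
  refine Measurable.mul (Measurable.add ?_ ?_) measurable_mass_fst
  · exact Measurable.tsum fun i => (hsub i).sub (hsub' i)
  · exact Measurable.tsum fun i => (hsub' i).sub (hsub i)

lemma measurable_mul_mass {f : ProbVec E → ℝ≥0∞} (hf : Measurable f) :
    Measurable fun q : WeightPair E => f (toProbVec q.2) * mass q.1 :=
  (hf.comp (measurable_toProbVec.comp measurable_snd)).mul measurable_mass_fst

lemma lintegral_add_mul_filterGap (N : F → E → E → ℝ≥0∞) (φ : Measure F)
    {G : WeightPair E → ℝ≥0∞} (hG : Measurable G) (L : ℝ≥0∞) (n : ℕ) (μ : Measure (ProbVec E))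
    (lam : ProbVec E) :
    ∫⁻ α, ∫⁻ q, G q + L * filterGap q ∂(pairKernel N φ ^ n) (α.weight, lam.weight) ∂μ =
      ∫⁻ α, ∫⁻ q, G q ∂(pairKernel N φ ^ n) (α.weight, lam.weight) ∂μ +
        L * meanFilterGap N φ μ lam n := by
  have hmeas : ∀ {G : WeightPair E → ℝ≥0∞}, Measurable G → Measurable fun α : ProbVec E =>
      ∫⁻ q, G q ∂(pairKernel N φ ^ n) (α.weight, lam.weight) := fun hG =>
    hG.lintegral_kernel.comp (measurable_weight.prodMk measurable_const)
  simp only [lintegral_add_left hG, lintegral_const_mul _ measurable_filterGap]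
  rw [lintegral_add_left (hmeas hG), lintegral_const_mul _ (hmeas measurable_filterGap),
    meanFilterGap]

namespace IsTransitionDensity
variable {N : F → E → E → ℝ≥0∞} {φ : Measure F} (h : IsTransitionDensity N φ)
include h

lemma measurable_toProbVec_mix_right (a : E → ℝ≥0∞) :
    Measurable fun y => toProbVec (mix a (N y)) :=
  measurable_toProbVec.comp (h.measurable_mix_right a)

variable [SigmaFinite φ]

lemma isMarkovKernel_filterTransition : IsMarkovKernel (filterTransition N φ) := by
  have := h.isMarkovKernel_predictiveKernel
  exact Kernel.IsMarkovKernel.map _ (measurable_toProbVec.comp h.measurable_mix_weight)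

lemma filterTransition_apply (α : ProbVec E) :
    filterTransition N φ α = (φ.withDensity fun y => mass (mix α.weight (N y))).map
      fun y => toProbVec (mix α.weight (N y)) := by
  have := h.isMarkovKernel_predictiveKernel
  have hstep : Measurable fun q : ProbVec E × F => toProbVec (mix q.1.weight (N q.2)) :=
    measurable_toProbVec.comp h.measurable_mix_weight
  rw [filterTransition, Kernel.map_apply _ hstep, Kernel.prod_apply, Kernel.id_apply,
    Measure.dirac_prod, Measure.map_map hstep measurable_prodMk_left, h.predictiveKernel_apply]
  rfl

lemma lintegral_filterTransition {f : ProbVec E → ℝ≥0∞} (hf : Measurable f) (α : ProbVec E) :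
    ∫⁻ β, f β ∂filterTransition N φ α = ∫⁻ y, perspective f (mix α.weight (N y)) ∂φ := by
  have hstep := h.measurable_toProbVec_mix_right α.weight
  have hf' : Measurable fun y => f (toProbVec (mix α.weight (N y))) := hf.comp hstep
  rw [h.filterTransition_apply, lintegral_map hf hstep,
    lintegral_withDensity_eq_lintegral_mul _ (h.measurable_mass_mix_right _) hf']
  exact lintegral_congr fun y => mul_comm _ _

lemma lintegral_perspective_pairKernel {f : ProbVec E → ℝ≥0∞} (hf : Measurable f)
    {p : WeightPair E} (hp : mass p.1 ≠ ∞) :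
    ∫⁻ q, perspective f q.1 ∂pairKernel N φ p =
      perspective (fun α => ∫⁻ β, f β ∂filterTransition N φ α) p.1 := by
  have hpers : Measurable fun y => perspective f (mix (toProbVec p.1).weight (N y)) :=
    (measurable_perspective hf).comp (h.measurable_mix_right _)
  rw [h.lintegral_pairKernel (measurable_perspective_fst hf)]
  calc ∫⁻ y, perspective f (mix p.1 (N y)) ∂φ
      = ∫⁻ y, mass p.1 * perspective f (mix (toProbVec p.1).weight (N y)) ∂φ := by
        refine lintegral_congr fun y => ?_
        rw [← perspective_smul f hp, ← mix_smul, mass_smul_weight_toProbVec hp]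
    _ = perspective (fun α => ∫⁻ β, f β ∂filterTransition N φ α) p.1 := by
        rw [lintegral_const_mul _ hpers, ← h.lintegral_filterTransition hf, mul_comm, perspective]

lemma lintegral_perspective_pairKernel_pow {f : ProbVec E → ℝ≥0∞} (hf : Measurable f) (n : ℕ)
    {p : WeightPair E} (hp : mass p.1 ≠ ∞) :
    ∫⁻ q, perspective f q.1 ∂(pairKernel N φ ^ n) p =
      perspective (fun α => ∫⁻ β, f β ∂(filterTransition N φ ^ n) α) p.1 := by
  induction n generalizing f with
  | zero =>
    rw [lintegral_pow_zero _ (measurable_perspective_fst hf)]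
    simp only [lintegral_pow_zero _ hf]
  | succ n ih =>
    have hfin : ∀ᵐ q ∂(pairKernel N φ ^ n) p, mass q.1 < ∞ :=
      ae_lt_top measurable_mass_fst (by rwa [h.lintegral_mass_fst_pow])
    simp only [add_comm n 1, lintegral_pow_add _ 1 n hf, pow_one]
    rw [lintegral_pow_add _ 1 n (measurable_perspective_fst hf), pow_one,
      ← ih hf.lintegral_kernel]
    exact lintegral_congr_ae
      (hfin.mono fun q hq => h.lintegral_perspective_pairKernel hf hq.ne)

lemma lintegral_filterTransition_pow {f : ProbVec E → ℝ≥0∞} (hf : Measurable f) (n : ℕ)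
    (α : ProbVec E) (b : E → ℝ≥0∞) :
    ∫⁻ β, f β ∂(filterTransition N φ ^ n) α =
      ∫⁻ q, perspective f q.1 ∂(pairKernel N φ ^ n) (α.weight, b) := by
  rw [h.lintegral_perspective_pairKernel_pow hf n α.mass_weight_ne_top, perspective_weight]

lemma lintegral_mul_mass_pow_eq_tsum [DecidableEq E] {f : ProbVec E → ℝ≥0∞} (hf : Measurable f)
    (n : ℕ) (a b : E → ℝ≥0∞) :
    ∫⁻ q, f (toProbVec q.2) * mass q.1 ∂(pairKernel N φ ^ n) (a, b) = ∑' i, a i *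
      ∫⁻ q, f (toProbVec q.2) * mass q.1 ∂(pairKernel N φ ^ n) (Pi.single i 1, b) := by
  rw [h.tsum_mul_lintegral_pairKernel_pow (measurable_mul_mass hf),
    h.lintegral_pairKernel_pow (measurable_mul_mass hf)]
  refine lintegral_congr fun v => ?_
  conv_lhs => rw [← mix_single a]
  simp only [mixList_mix, mass_mix, ← ENNReal.tsum_mul_left, mul_left_comm]

lemma lintegral_filterTransition_pow_eq {f : ProbVec E → ℝ≥0∞} (hf : Measurable f)
    (n : ℕ) {μ : Measure (ProbVec E)} {lam : ProbVec E} (hμ : HasBarycenter μ lam) :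
    ∫⁻ β, f β ∂(filterTransition N φ ^ n) lam =
      ∫⁻ α, ∫⁻ q, f (toProbVec q.2) * mass q.1 ∂(pairKernel N φ ^ n) (α.weight, lam.weight) ∂μ := by
  classical
  rw [lintegral_congr fun α : ProbVec E =>
      h.lintegral_mul_mass_pow_eq_tsum hf n α.weight lam.weight,
    hμ.lintegral_tsum, ← h.lintegral_mul_mass_pow_eq_tsum hf,
    h.lintegral_filterTransition_pow hf n lam lam.weight,
    h.lintegral_pairKernel_pow (measurable_perspective_fst hf),
    h.lintegral_pairKernel_pow (measurable_mul_mass hf)]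
  rfl

lemma lintegral_filterGap_le {ε C : ℝ≥0∞} (hC : ∀ p : WeightPair E, mass p.1 ≠ ∞ → mass p.2 ≠ ∞ →
      filterGap p ≤ ε * mass p.1 + C * predictionGap N φ p) (n : ℕ) {p : WeightPair E}
    (hp₁ : mass p.1 ≠ ∞) (hp₂ : mass p.2 ≠ ∞) :
    ∫⁻ q, filterGap q ∂(pairKernel N φ ^ n) p ≤
      ε * mass p.1 + C * ∫⁻ q, predictionGap N φ q ∂(pairKernel N φ ^ n) p := by
  have hfin₁ : ∀ᵐ q ∂(pairKernel N φ ^ n) p, mass q.1 < ∞ :=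
    ae_lt_top measurable_mass_fst (by rwa [h.lintegral_mass_fst_pow])
  have hfin₂ : ∀ᵐ q ∂(pairKernel N φ ^ n) p, mass q.2 < ∞ :=
    ae_lt_top measurable_mass_snd (by rwa [h.lintegral_mass_snd_pow])
  rw [← h.lintegral_mass_fst_pow n p, ← lintegral_const_mul _ measurable_mass_fst,
    ← lintegral_const_mul _ measurable_predictionGap,
    ← lintegral_add_left (measurable_mass_fst.const_mul ε)]
  refine lintegral_mono_ae ?_
  filter_upwards [hfin₁, hfin₂] with q hq₁ hq₂ using hC q hq₁.ne hq₂.ne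

lemma tendsto_meanFilterGap (hN : PredictionControlsFilter N φ) {μ : Measure (ProbVec E)}
    [IsProbabilityMeasure μ] {lam : ProbVec E} (hμ : HasBarycenter μ lam) :
    Tendsto (meanFilterGap N φ μ lam) atTop (𝓝 0) := by
  classical
  refine ENNReal.tendsto_nhds_zero.2 fun ε hε => ?_
  obtain ⟨C, hC, hgap⟩ := hN (ε / 2) (ENNReal.half_pos hε.ne').ne'
  set g : E → ℕ → ℝ≥0∞ := fun i n =>
    ∫⁻ q, predictionGap N φ q ∂(pairKernel N φ ^ n) (Pi.single i 1, lam.weight)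
  have hg : Tendsto (fun n => C * ∑' i, lam.weight i * g i n) atTop (𝓝 0) := by
    simpa using ENNReal.Tendsto.const_mul
      (h.tendsto_tsum_lintegral_predictionGap lam.mass_weight_ne_top) (Or.inr hC)
  have hα : ∀ n (α : ProbVec E),
      ∫⁻ q, filterGap q ∂(pairKernel N φ ^ n) (α.weight, lam.weight) ≤
        ε / 2 + C * ∑' i, α.weight i * g i n := fun n α => by
    refine (h.lintegral_filterGap_le hgap n α.mass_weight_ne_top lam.mass_weight_ne_top).trans ?_
    rw [α.mass_weight, mul_one]
    gcongr
    conv_lhs => rw [← mix_single α.weight]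
    exact h.lintegral_predictionGap_mix_le n _ _ _
  have hmeas : ∀ n, Measurable fun α : ProbVec E => ∑' i, α.weight i * g i n := fun n =>
    Measurable.tsum fun i => (measurable_weight_apply i).mul_const _
  filter_upwards [ENNReal.tendsto_nhds_zero.1 hg (ε / 2) (ENNReal.half_pos hε.ne')] with n hn
  calc meanFilterGap N φ μ lam n
      ≤ ∫⁻ α, ε / 2 + C * ∑' i, α.weight i * g i n ∂μ := lintegral_mono (hα n)
    _ = ε / 2 + C * ∑' i, lam.weight i * g i n := by
        rw [lintegral_add_left measurable_const, lintegral_const, measure_univ, mul_one,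
          lintegral_const_mul _ (hmeas n), hμ.lintegral_tsum]
    _ ≤ ε := (add_le_add_right hn _).trans_eq (ENNReal.add_halves ε)

lemma lintegral_filterTransition_pow_le {L : ℝ≥0∞} {f : ProbVec E → ℝ≥0∞} (hfm : Measurable f)
    (hf : IsBoundedLipschitz L f) (n : ℕ) {μ : Measure (ProbVec E)} {lam : ProbVec E}
    (hμ : HasBarycenter μ lam) :
    ∫⁻ α, ∫⁻ β, f β ∂(filterTransition N φ ^ n) α ∂μ ≤
        ∫⁻ β, f β ∂(filterTransition N φ ^ n) lam + L * meanFilterGap N φ μ lam n ∧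
      ∫⁻ β, f β ∂(filterTransition N φ ^ n) lam ≤
        ∫⁻ α, ∫⁻ β, f β ∂(filterTransition N φ ^ n) α ∂μ + L * meanFilterGap N φ μ lam n := by
  rw [h.lintegral_filterTransition_pow_eq hfm n hμ]
  simp only [h.lintegral_filterTransition_pow hfm n _ lam.weight]
  rw [← lintegral_add_mul_filterGap N φ (measurable_mul_mass hfm),
    ← lintegral_add_mul_filterGap N φ (measurable_perspective_fst hfm)]
  exact ⟨lintegral_mono fun α => lintegral_mono fun q => (hf.mul_mass_le q).1,
    lintegral_mono fun α => lintegral_mono fun q => (hf.mul_mass_le q).2⟩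

end IsTransitionDensity

lemma tendsto_of_le_add_of_le_add {ι : Type*} {l : Filter ι} {a b r : ι → ℝ≥0∞} {c : ℝ≥0∞}
    (ha : Tendsto a l (𝓝 c)) (hr : Tendsto r l (𝓝 0)) (hab : ∀ n, a n ≤ b n + r n)
    (hba : ∀ n, b n ≤ a n + r n) : Tendsto b l (𝓝 c) := by
  have hlow : Tendsto (fun n => a n - r n) l (𝓝 c) := by
    simpa using ENNReal.Tendsto.sub ha hr (Or.inr zero_ne_top)
  have hupp : Tendsto (fun n => a n + r n) l (𝓝 c) := by simpa using ha.add hr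
  exact tendsto_of_tendsto_of_tendsto_of_le_of_le hlow hupp
    (fun n => tsub_le_iff_right.2 (hab n)) hba

end Merging

/-! ### Real matrices and observation laws -/

section ObservationLaw
variable {E F : Type*}

/-- The matrix `M(y)` has uniformly bounded row sums. -/
def HasBoundedRows (M : F → E → E → ℝ) (y : F) : Prop :=
  ∃ C : ℝ, ∀ (i : E) (s : Finset E), ∑ j ∈ s, M y i j ≤ C

/-- The entries of the matrices `M(y)` as extended nonnegative numbers. -/
noncomputable def transitionDensity (M : F → E → E → ℝ) : F → E → E → ℝ≥0∞ :=
  fun y i j => ENNReal.ofReal (M y i j)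

variable {M : F → E → E → ℝ}

lemma HasBoundedRows.mass_mix_ne_top (hMnn : ∀ y i j, 0 ≤ M y i j) {y : F}
    (hy : HasBoundedRows M y) {a : E → ℝ≥0∞} (ha : mass a ≠ ∞) :
    mass (mix a (transitionDensity M y)) ≠ ∞ := by
  obtain ⟨C, hC⟩ := hy
  have hrow : ∀ i, mass (transitionDensity M y i) ≤ ENNReal.ofReal C := fun i => by
    rw [mass, ENNReal.tsum_eq_iSup_sum]
    refine iSup_le fun s => ?_
    simp only [transitionDensity, ← ENNReal.ofReal_sum_of_nonneg fun j _ => hMnn y i j]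
    exact ENNReal.ofReal_le_ofReal (hC i s)
  refine ne_top_of_le_ne_top (ENNReal.mul_ne_top ha (ofReal_ne_top (r := C))) ?_
  rw [mass_mix, mass, ← ENNReal.tsum_mul_right]
  exact ENNReal.tsum_le_tsum fun i => by gcongr; exact hrow i

lemma rowMul_toReal (hMnn : ∀ y i j, 0 ≤ M y i j) {y : F} {a : E → ℝ≥0∞}
    (ha : mass (mix a (transitionDensity M y)) ≠ ∞) :
    rowMul M (fun i => (a i).toReal) y = fun j => (mix a (transitionDensity M y) j).toReal := by
  funext j
  have hj : ∑' i, a i * transitionDensity M y i j ≠ ∞ := ENNReal.ne_top_of_tsum_ne_top ha j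
  rw [rowMul, mix, ENNReal.tsum_toReal_eq (ENNReal.ne_top_of_tsum_ne_top hj)]
  simp only [ENNReal.toReal_mul, transitionDensity, ENNReal.toReal_ofReal (hMnn _ _ _)]

lemma ofReal_rowTot_toReal {a : E → ℝ≥0∞} (ha : mass a ≠ ∞) :
    ENNReal.ofReal (rowTot fun i => (a i).toReal) = mass a := by
  rw [rowTot, ← ENNReal.tsum_toReal_eq (ENNReal.ne_top_of_tsum_ne_top ha)]
  exact ENNReal.ofReal_toReal ha

lemma rowIter_toReal (hMnn : ∀ y i j, 0 ≤ M y i j) {ys : List F}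
    (hys : ∀ y ∈ ys, HasBoundedRows M y) {a : E → ℝ≥0∞} (ha : mass a ≠ ∞) :
    mass (mixList (transitionDensity M) a ys) ≠ ∞ ∧ rowIter M (fun i => (a i).toReal) ys =
      fun j => (mixList (transitionDensity M) a ys j).toReal := by
  induction ys generalizing a with
  | nil => exact ⟨ha, rfl⟩
  | cons y ys ih =>
    have hfin := (hys y List.mem_cons_self).mass_mix_ne_top hMnn ha
    obtain ⟨hmass, hrow⟩ := ih (fun z hz => hys z (List.mem_cons_of_mem y hz)) hfin
    refine ⟨hmass, ?_⟩
    rw [rowIter, List.foldl_cons, rowMul_toReal hMnn hfin]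
    exact hrow

lemma ofReal_rowTot_rowIter (hMnn : ∀ y i j, 0 ≤ M y i j) {ys : List F}
    (hys : ∀ y ∈ ys, HasBoundedRows M y) (α : ProbVec E) :
    ENNReal.ofReal (rowTot (rowIter M α.1 ys)) =
      mass (mixList (transitionDensity M) α.weight ys) := by
  obtain ⟨hmass, hrow⟩ := rowIter_toReal hMnn hys α.mass_weight_ne_top
  simp only [α.toReal_weight] at hrow
  rw [hrow, ofReal_rowTot_toReal hmass]

variable [MeasurableSpace F]

lemma ae_pi_forall_mem_ofFn {φ : Measure F} [SigmaFinite φ] {P : F → Prop} (h : ∀ᵐ y ∂φ, P y)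
    (n : ℕ) : ∀ᵐ v ∂(Measure.pi fun _ : Fin n => φ), ∀ y ∈ List.ofFn v, P y := by
  have hcoord : ∀ k : Fin n, ∀ᵐ v ∂(Measure.pi fun _ : Fin n => φ), P (v k) := fun k =>
    (Measure.quasiMeasurePreserving_eval (fun _ : Fin n => φ) k).ae h
  filter_upwards [ae_all_iff.2 hcoord] with v hv
  exact List.forall_mem_ofFn_iff.2 hv

/-- `Q α` is the law of the observation sequence of the hidden Markov model with transition
density `N` and initial distribution `α`. -/
structure IsObservationLaw (N : F → E → E → ℝ≥0∞) (φ : Measure F)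
    (Q : ProbVec E → Measure (ℕ → F)) : Prop where
  isProbabilityMeasure : ∀ α, IsProbabilityMeasure (Q α)
  apply_cylinder : ∀ (α : ProbVec E) (n : ℕ) (A : Set (Fin n → F)), MeasurableSet A →
    Q α {y | (fun k : Fin n => y k) ∈ A} =
      ∫⁻ v in A, mass (mixList N α.weight (List.ofFn v)) ∂(Measure.pi fun _ => φ)

lemma isObservationLaw_transitionDensity {φ : Measure F} [SigmaFinite φ]
    (hMnn : ∀ y i j, 0 ≤ M y i j) (hMbd : ∀ᵐ y ∂φ, HasBoundedRows M y)
    {Q : ProbVec E → Measure (ℕ → F)} (hQprob : ∀ α, IsProbabilityMeasure (Q α))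
    (hQ : ∀ (α : ProbVec E) (n : ℕ) (A : Set (Fin n → F)), MeasurableSet A →
      Q α {y | (fun k : Fin n => y k) ∈ A} =
        ∫⁻ v in A, ENNReal.ofReal (rowTot (rowIter M (α : E → ℝ) (List.ofFn v)))
          ∂(Measure.pi fun _ => φ)) :
    IsObservationLaw (transitionDensity M) φ Q where
  isProbabilityMeasure := hQprob
  apply_cylinder α n A hA := by
    rw [hQ α n A hA]
    refine lintegral_congr_ae (ae_restrict_of_ae ?_)
    filter_upwards [ae_pi_forall_mem_ofFn hMbd n] with v hv
    exact ofReal_rowTot_rowIter hMnn hv α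

lemma measurable_transitionDensity (hMmeas : ∀ i j, Measurable fun y => M y i j) (i j : E) :
    Measurable fun y => transitionDensity M y i j :=
  (hMmeas i j).ennreal_ofReal

lemma IsObservationLaw.isTransitionDensity {N : F → E → E → ℝ≥0∞} {φ : Measure F} [SigmaFinite φ]
    {Q : ProbVec E → Measure (ℕ → F)} (hQ : IsObservationLaw N φ Q)
    (hN : ∀ i j, Measurable fun y => N y i j) [Countable E] [Nonempty (ProbVec E)] :
    IsTransitionDensity N φ where
  measurable := hN
  lintegral_mass i := by
    classical
    have := hQ.isProbabilityMeasure (toProbVec (Pi.single i 1))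
    have hone := hQ.apply_cylinder (toProbVec (Pi.single i 1)) 1 Set.univ MeasurableSet.univ
    have hrow : ∀ y, mix (Pi.single i 1) (N y) = N y i := fun y => by
      funext j
      simp only [mix, Pi.single_apply, ite_mul, one_mul, zero_mul, tsum_ite_eq]
    have hmeas : Measurable fun v : Fin 1 → F => mass (N (v 0) i) :=
      measurable_mass.comp (measurable_pi_lambda _ fun j => (hN i j).comp (measurable_pi_apply 0))
    simp only [weight_toProbVec_of_mass_eq_one (mass_single i 1), mixList, List.ofFn_succ,
      List.ofFn_zero, List.foldl_cons, List.foldl_nil, hrow, Set.mem_univ, Set.ofPred_true,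
      measure_univ, Measure.restrict_univ] at hone
    rw [lintegral_pi_snoc φ hmeas, Measure.pi_of_empty, lintegral_dirac] at hone
    exact hone.symm

lemma IsTransitionDensity.lintegral_transitionDensity {φ : Measure F}
    (h : IsTransitionDensity (transitionDensity M) φ) (hMnn : ∀ y i j, 0 ≤ M y i j)
    (hMmeas : ∀ i j, Measurable fun y => M y i j) (i j : E) :
    ∫⁻ y, transitionDensity M y i j ∂φ = ENNReal.ofReal (transMat M φ i j) := by
  have hle : ∫⁻ y, transitionDensity M y i j ∂φ ≤ 1 :=
    (lintegral_mono fun y => ENNReal.le_tsum j).trans_eq (h.lintegral_mass i)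
  rw [transMat, integral_eq_lintegral_of_nonneg_ae (Eventually.of_forall fun y => hMnn y i j)
    (hMmeas i j).aestronglyMeasurable]
  exact (ENNReal.ofReal_toReal (ne_top_of_le_ne_top one_ne_top hle)).symm

end ObservationLaw

/-! ### Uniform observability -/

section Observability

section TotalVariation
variable {X : Type*} [MeasurableSpace X] {μ ν : Measure X} {T : ℝ≥0∞}

lemma measure_le_add_of_isSetRing [IsFiniteMeasure μ] [IsFiniteMeasure ν] {𝒞 : Set (Set X)}
    (h𝒞 : IsSetRing 𝒞) (huniv : Set.univ ∈ 𝒞) (hgen : ‹_› = MeasurableSpace.generateFrom 𝒞)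
    (h : ∀ B ∈ 𝒞, μ B ≤ ν B + T) {A : Set X} (hA : MeasurableSet A) : μ A ≤ ν A + T := by
  refine ENNReal.le_of_forall_pos_le_add fun ε hε _ => ?_
  obtain ⟨B, hB, hBA⟩ := exists_measure_symmDiff_lt_of_generateFrom_isSetRing (μ := μ + ν) h𝒞
    ⟨{Set.univ}, Set.countable_singleton _, by simpa using huniv, by simp⟩ hgen hA
    (ENNReal.half_pos (ENNReal.coe_ne_zero.2 hε.ne'))
  rw [Measure.add_apply] at hBA
  have hμ : μ A ≤ ε / 2 + μ B := tsub_le_iff_right.1 <|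
    (le_measure_symmDiff.trans_eq (by rw [symmDiff_comm])).trans (le_self_add.trans hBA.le)
  have hν : ν B ≤ ε / 2 + ν A :=
    tsub_le_iff_right.1 <| le_measure_symmDiff.trans (le_add_self.trans hBA.le)
  calc μ A ≤ ε / 2 + (ε / 2 + ν A + T) :=
        hμ.trans (by gcongr; exact (h B hB).trans (by gcongr))
    _ = ν A + T + (ε / 2 + ε / 2) := by ring
    _ = ν A + T + ε := by rw [ENNReal.add_halves]

lemma measure_le_add_of_cylinders {F : Type*} [MeasurableSpace F] {μ ν : Measure (ℕ → F)}
    [IsFiniteMeasure μ] [IsFiniteMeasure ν]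
    (h : ∀ (n : ℕ) (A : Set (Fin n → F)), MeasurableSet A →
      μ {y | (fun k : Fin n => y k) ∈ A} ≤ ν {y | (fun k : Fin n => y k) ∈ A} + T)
    {A : Set (ℕ → F)} (hA : MeasurableSet A) : μ A ≤ ν A + T := by
  refine measure_le_add_of_isSetRing isSetRing_measurableCylinders
    (univ_mem_measurableCylinders _) generateFrom_measurableCylinders.symm (fun B hB => ?_) hA
  obtain ⟨s, S, hS, rfl⟩ := (mem_measurableCylinders _).1 hB
  have hlt : ∀ i ∈ s, i < s.sup id + 1 := fun i hi =>
    Nat.lt_succ_of_le (Finset.le_sup (f := id) hi)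
  have hrestrict : Measurable fun (v : Fin (s.sup id + 1) → F) (i : s) => v ⟨i, hlt i i.2⟩ :=
    measurable_pi_lambda _ fun _ => measurable_pi_apply _
  exact h (s.sup id + 1) _ (hrestrict hS)

lemma tvMeasure_le_of_le_add [IsProbabilityMeasure μ] [IsProbabilityMeasure ν]
    (h : ∀ A, MeasurableSet A → μ A ≤ ν A + T) : tvMeasure μ ν ≤ 4 * T := by
  have h' : ∀ A, MeasurableSet A → ν A ≤ μ A + T := fun A hA => by
    refine (ENNReal.add_le_add_iff_right (measure_ne_top μ Aᶜ)).1 ?_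
    calc ν A + μ Aᶜ ≤ ν A + (ν Aᶜ + T) := by gcongr; exact h _ hA.compl
      _ = μ A + μ Aᶜ + T := by
        rw [← add_assoc, prob_add_prob_compl hA, prob_add_prob_compl hA]
      _ = μ A + T + μ Aᶜ := by ring
  calc tvMeasure μ ν ≤ 2 * (T + T) := by
        rw [tvMeasure]
        gcongr
        exact iSup₂_le fun A hA =>
          add_le_add (tsub_le_iff_left.2 (h A hA)) (tsub_le_iff_left.2 (h' A hA))
    _ = 4 * T := by ring

end TotalVariation

variable {E F : Type*}

lemma massExcess_smul {c : ℝ≥0∞} (hc : c ≠ ∞) (p : WeightPair E) :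
    massExcess (c • p) = c * massExcess p := by
  simp only [massExcess, Prod.smul_fst, Prod.smul_snd, mass_smul, ENNReal.mul_sub fun _ _ => hc]

lemma rescale_smul_smul (c : ℝ≥0∞) {c' : ℝ≥0∞} (h0 : c' ≠ 0) (htop : c' ≠ ∞)
    (a b : E → ℝ≥0∞) : rescale (c • a, c' • b) = c • rescale (a, b) := by
  refine Prod.ext rfl ?_
  simp only [rescale, mass_smul, Prod.smul_snd, smul_smul]
  congr 1
  rw [mul_comm c' (mass b), ENNReal.div_mul _ (Or.inr h0) (Or.inr htop),
    ENNReal.mul_div_cancel_right h0 htop, mul_div_assoc]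

variable [MeasurableSpace F] {N : F → E → E → ℝ≥0∞} {φ : Measure F}

lemma mass_le_predictionGap_zero_right (N : F → E → E → ℝ≥0∞) (φ : Measure F) [Countable E]
    (a : E → ℝ≥0∞) : mass a ≤ predictionGap N φ (a, 0) := by
  refine le_trans ?_ (le_iSup (fun m => horizonGap N φ m (a, 0)) 0)
  rw [horizonGap, lintegral_pow_zero _ measurable_massExcess]
  simp [massExcess, rescale, mass]

/-- Initial distributions are determined, uniformly, by the laws of the observations. -/
def IsUniformlyObservable (Q : ProbVec E → Measure (ℕ → F)) : Prop :=
  ∀ ε : ℝ, 0 < ε → ∃ δ : ℝ, 0 < δ ∧ ∀ α β : ProbVec E,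
    tvMeasure (Q α) (Q β) < ENNReal.ofReal δ → tvDist α β < ε

variable [Countable E] [SigmaFinite φ]

lemma IsTransitionDensity.predictionGap_smul_smul (h : IsTransitionDensity N φ) {c c' : ℝ≥0∞}
    (hc : c ≠ ∞) (h0 : c' ≠ 0) (htop : c' ≠ ∞) (a b : E → ℝ≥0∞) :
    predictionGap N φ (c • a, c' • b) = c * predictionGap N φ (a, b) := by
  rw [predictionGap, predictionGap, ENNReal.mul_iSup]
  refine iSup_congr fun m => ?_
  simp only [horizonGap, rescale_smul_smul c h0 htop,
    h.lintegral_pairKernel_pow measurable_massExcess, Prod.smul_fst, Prod.smul_snd, mixList_smul,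
    ← Prod.smul_mk, massExcess_smul hc]
  exact lintegral_const_mul _ (measurable_massExcess.comp
    ((h.measurable_mixList _ m).prodMk (h.measurable_mixList _ m)))

namespace IsObservationLaw
variable {Q : ProbVec E → Measure (ℕ → F)} (hQ : IsObservationLaw N φ Q)
  (h : IsTransitionDensity N φ)
include hQ h

lemma apply_cylinder_le (α β : ProbVec E) {n : ℕ} {A : Set (Fin n → F)} (hA : MeasurableSet A) :
    Q α {y | (fun k : Fin n => y k) ∈ A} ≤
      Q β {y | (fun k : Fin n => y k) ∈ A} + predictionGap N φ (α.weight, β.weight) := by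
  set q : (Fin n → F) → WeightPair E := fun v =>
    (mixList N α.weight (List.ofFn v), mixList N β.weight (List.ofFn v))
  have hq : Measurable q := (h.measurable_mixList _ n).prodMk (h.measurable_mixList _ n)
  have hexcess : Measurable fun v => massExcess (q v) := measurable_massExcess.comp hq
  have hrescale : rescale (α.weight, β.weight) = (α.weight, β.weight) := by
    rw [rescale, α.mass_weight, β.mass_weight, ENNReal.div_self one_ne_zero one_ne_top, one_smul]
  calc Q α {y | (fun k : Fin n => y k) ∈ A}
      = ∫⁻ v in A, mass (q v).1 ∂(Measure.pi fun _ => φ) := hQ.apply_cylinder α n A hA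
    _ ≤ ∫⁻ v in A, mass (q v).2 + massExcess (q v) ∂(Measure.pi fun _ => φ) :=
        lintegral_mono fun v => le_add_tsub
    _ = Q β {y | (fun k : Fin n => y k) ∈ A} +
          ∫⁻ v in A, massExcess (q v) ∂(Measure.pi fun _ => φ) := by
        rw [lintegral_add_right _ hexcess, hQ.apply_cylinder β n A hA]
    _ ≤ Q β {y | (fun k : Fin n => y k) ∈ A} + horizonGap N φ n (α.weight, β.weight) := by
        rw [horizonGap, hrescale, h.lintegral_pairKernel_pow measurable_massExcess]
        gcongr
        exact Measure.restrict_le_self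
    _ ≤ Q β {y | (fun k : Fin n => y k) ∈ A} + predictionGap N φ (α.weight, β.weight) := by
        gcongr
        exact le_iSup (fun m => horizonGap N φ m (α.weight, β.weight)) n

lemma tvMeasure_le (α β : ProbVec E) :
    tvMeasure (Q α) (Q β) ≤ 4 * predictionGap N φ (α.weight, β.weight) := by
  have := hQ.isProbabilityMeasure
  exact tvMeasure_le_of_le_add fun A hA =>
    measure_le_add_of_cylinders (fun n B hB => hQ.apply_cylinder_le h α β hB) hA

lemma exists_l1Dist_le (hUO : IsUniformlyObservable Q) {ε : ℝ≥0∞} (hε : ε ≠ 0) :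
    ∃ C ≠ ∞, 2 ≤ C ∧ ∀ α β : ProbVec E,
      l1Dist α.weight β.weight ≤ ε + C * predictionGap N φ (α.weight, β.weight) := by
  have hmin : min ε 1 ≠ ∞ := ne_top_of_le_ne_top one_ne_top (min_le_right _ _)
  obtain ⟨δ, hδ, hclose⟩ := hUO (min ε 1).toReal
    (ENNReal.toReal_pos (lt_min hε.bot_lt one_pos).ne' hmin)
  have hδ' : ENNReal.ofReal δ ≠ 0 := (ENNReal.ofReal_pos.2 hδ).ne'
  refine ⟨8 / ENNReal.ofReal δ + 2, ?_, le_add_self, fun α β => ?_⟩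
  · exact ENNReal.add_ne_top.2 ⟨ENNReal.div_ne_top (by norm_num) hδ', by norm_num⟩
  set T := predictionGap N φ (α.weight, β.weight)
  by_cases hT : 4 * T < ENNReal.ofReal δ
  · refine le_add_of_le_left ?_
    calc l1Dist α.weight β.weight = ENNReal.ofReal (tvDist α β) := (α.ofReal_tvDist β).symm
      _ ≤ ENNReal.ofReal (min ε 1).toReal :=
        ENNReal.ofReal_le_ofReal (hclose α β ((hQ.tvMeasure_le h α β).trans_lt hT)).le
      _ ≤ ε := by rw [ENNReal.ofReal_toReal hmin]; exact min_le_left _ _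
  · refine le_add_of_le_right ?_
    calc l1Dist α.weight β.weight ≤ 2 := α.l1Dist_weight_le_two β
      _ = 2 / ENNReal.ofReal δ * ENNReal.ofReal δ := (ENNReal.div_mul_cancel hδ' ofReal_ne_top).symm
      _ ≤ 2 / ENNReal.ofReal δ * (4 * T) := by gcongr; exact not_lt.1 hT
      _ = 8 / ENNReal.ofReal δ * T := by simp only [div_eq_mul_inv]; ring
      _ ≤ (8 / ENNReal.ofReal δ + 2) * T := by gcongr; exact le_self_add

lemma predictionControlsFilter [Nonempty (ProbVec E)] (hUO : IsUniformlyObservable Q) :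
    PredictionControlsFilter N φ := by
  intro ε hε
  obtain ⟨C, hC, hC2, hdist⟩ := hQ.exists_l1Dist_le h hUO hε
  refine ⟨C, hC, fun ⟨a, b⟩ ha hb => ?_⟩
  rcases eq_or_ne (mass b) 0 with hb0 | hb0
  · obtain rfl : b = 0 := funext (ENNReal.tsum_eq_zero.1 hb0)
    refine le_add_of_le_right (mul_le_mul' ?_ (mass_le_predictionGap_zero_right N φ a))
    exact (ProbVec.l1Dist_weight_le_two _ _).trans hC2
  set α := toProbVec a
  set β := toProbVec b
  have hgap : predictionGap N φ (a, b) = mass a * predictionGap N φ (α.weight, β.weight) := by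
    rw [← h.predictionGap_smul_smul ha hb0 hb, mass_smul_weight_toProbVec ha,
      mass_smul_weight_toProbVec hb]
  calc filterGap (a, b) ≤ (ε + C * predictionGap N φ (α.weight, β.weight)) * mass a := by
        rw [filterGap]; gcongr; exact hdist α β
    _ = ε * mass a + C * predictionGap N φ (a, b) := by rw [hgap]; ring

end IsObservationLaw
end Observability

/-! ### The `ℓ¹` metric on probability vectors -/

section Topology
variable {E : Type*}

lemma ProbVec.norm_rpow_one (α : ProbVec E) (i : E) : ‖α.1 i‖ ^ (1 : ℝ≥0∞).toReal = α.1 i := by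
  rw [toReal_one, Real.rpow_one, Real.norm_of_nonneg (α.2.1 i)]

/-- The probability vectors as elements of the Banach space `ℓ¹(E)`. -/
def ProbVec.toLpOne (α : ProbVec E) : lp (fun _ : E => ℝ) 1 :=
  ⟨α.1, memℓp_gen (by simpa only [α.norm_rpow_one] using α.2.2.summable)⟩

lemma ProbVec.dist_toLpOne (α β : ProbVec E) : dist α.toLpOne β.toLpOne = tvDist α β := by
  rw [dist_eq_norm, lp.norm_eq_tsum_rpow (by simp)]
  simp only [toReal_one, Real.rpow_one, div_one]
  rfl

lemma ProbVec.summable_sub (α β : ProbVec E) : Summable fun i => α.1 i - β.1 i :=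
  α.2.2.summable.sub β.2.2.summable

lemma ProbVec.tvDist_eq_two_mul_tsum (α β : ProbVec E) :
    tvDist α β = 2 * ∑' i, max (α.1 i - β.1 i) 0 := by
  have hmax : Summable fun i => max (α.1 i - β.1 i) 0 :=
    Summable.of_nonneg_of_le (fun i => le_max_right _ _)
      (fun i => max_le (le_abs_self _) (abs_nonneg _)) (α.summable_sub β).abs
  have hsub : HasSum (fun i => α.1 i - β.1 i) 0 := by simpa using α.2.2.sub β.2.2
  have habs := (hmax.hasSum.mul_left 2).sub hsub
  rw [sub_zero] at habs
  rw [tvDist, ← habs.tsum_eq]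
  refine tsum_congr fun i => ?_
  rcases le_total (α.1 i - β.1 i) 0 with hi | hi
  · rw [max_eq_right hi, abs_of_nonpos hi]; ring
  · rw [max_eq_left hi, abs_of_nonneg hi]; ring

-- Scheffé's lemma: the positive parts of `α - β` are dominated by `α`.
lemma ProbVec.tendsto_tvDist (α : ProbVec E) : Tendsto (tvDist α) (𝓝 α) (𝓝 0) := by
  have hsum : Tendsto (fun β : ProbVec E => ∑' i, max (α.1 i - β.1 i) 0) (𝓝 α)
      (𝓝 (∑' _ : E, (0 : ℝ))) := by
    refine tendsto_tsum_of_dominated_convergence (bound := α.1) α.2.2.summable (fun i => ?_)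
      (Eventually.of_forall fun β i => ?_)
    · have hcont : Continuous fun β : ProbVec E => max (α.1 i - β.1 i) 0 :=
        (continuous_const.sub ((continuous_apply i).comp continuous_subtype_val)).max
          continuous_const
      simpa using hcont.tendsto α
    · rw [Real.norm_of_nonneg (le_max_right _ _)]
      exact max_le (sub_le_self _ (β.2.1 i)) (α.2.1 i)
  simpa [funext (tvDist_eq_two_mul_tsum α)] using hsum.const_mul 2

lemma ProbVec.isInducing_toLpOne : IsInducing (ProbVec.toLpOne : ProbVec E → _) := by
  have hcoe : Continuous fun x : lp (fun _ : E => ℝ) 1 => (x : E → ℝ) :=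
    lp.uniformContinuous_coe.continuous
  have hcont : Continuous (ProbVec.toLpOne : ProbVec E → _) :=
    continuous_iff_continuousAt.2 fun α => tendsto_iff_dist_tendsto_zero.2 <| by
      simpa only [dist_comm _ α.toLpOne, ProbVec.dist_toLpOne] using α.tendsto_tvDist
  exact IsInducing.of_comp hcont hcoe IsInducing.subtypeVal

/-- The `ℓ¹` distance as a metric structure for the given topology of `P(E)`. -/
noncomputable abbrev ProbVec.pseudoMetricSpace (E : Type*) : PseudoMetricSpace (ProbVec E) :=
  ProbVec.isInducing_toLpOne.comapPseudoMetricSpace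

attribute [local instance] ProbVec.pseudoMetricSpace

lemma ProbVec.edist_eq (α β : ProbVec E) : edist α β = l1Dist α.weight β.weight := by
  rw [← ProbVec.ofReal_tvDist, ← ProbVec.dist_toLpOne, ← edist_dist]
  rfl

lemma IsBoundedLipschitz.continuous {L : ℝ≥0∞} (hL : L ≠ ∞) {f : ProbVec E → ℝ≥0∞}
    (hf : IsBoundedLipschitz L f) : Continuous f :=
  continuous_of_le_add_edist L hL fun α β => by
    simpa only [ProbVec.edist_eq] using hf.le_add α β

lemma ext_of_lintegral_lipschitz {X : Type*} [PseudoEMetricSpace X] [MeasurableSpace X]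
    [BorelSpace X] {μ ν : Measure X} [IsProbabilityMeasure μ] [IsProbabilityMeasure ν]
    (h : ∀ (L : NNReal) (f : X → NNReal), LipschitzWith L f → (∀ x, f x ≤ 1) →
      ∫⁻ x, f x ∂μ = ∫⁻ x, f x ∂ν) : μ = ν := by
  refine ext_of_generate_finite _ (borel_eq_generateFrom_isClosed (α := X) ▸
    BorelSpace.measurable_eq (α := X)) isPiSystem_isClosed (fun s hs => ?_) (by simp)
  obtain ⟨u, -, hu_pos, hu_lim⟩ := exists_seq_strictAnti_tendsto (0 : ℝ)
  refine tendsto_nhds_unique (tendsto_lintegral_thickenedIndicator_of_isClosed μ hs hu_pos hu_lim)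
    ((tendsto_lintegral_thickenedIndicator_of_isClosed ν hs hu_pos hu_lim).congr fun n => ?_)
  exact (h _ _ (lipschitzWith_thickenedIndicator (hu_pos n) s)
    (thickenedIndicator_le_one (hu_pos n) s)).symm

lemma ext_of_lintegral_isBoundedLipschitz [Countable E] {μ ν : Measure (ProbVec E)}
    [IsProbabilityMeasure μ] [IsProbabilityMeasure ν]
    (h : ∀ L ≠ ∞, ∀ f : ProbVec E → ℝ≥0∞, IsBoundedLipschitz L f →
      ∫⁻ α, f α ∂μ = ∫⁻ α, f α ∂ν) : μ = ν := by
  refine ext_of_lintegral_lipschitz fun L f hf hf₁ => ?_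
  refine h L coe_ne_top (fun α => f α) ⟨fun α => coe_le_one_iff.2 (hf₁ α), fun α β => ?_⟩
  have hdist : edist (f α) (f β) ≤ L * l1Dist α.weight β.weight :=
    (hf α β).trans_eq (by rw [ProbVec.edist_eq])
  rw [edist_nndist, NNReal.nndist_eq, ENNReal.coe_max, ENNReal.coe_sub] at hdist
  exact tsub_le_iff_left.1 ((le_max_left _ _).trans hdist)

end Topology

section Feller
variable {E F : Type*}

lemma mass_mix_sub_mix_le (a b : E → ℝ≥0∞) (as : E → E → ℝ≥0∞) :
    mass (mix a as - mix b as) ≤ mass (mix (a - b) as) := by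
  refine mass_mono fun j => tsub_le_iff_left.2 ?_
  rw [mix, mix, mix, ← ENNReal.tsum_add]
  refine ENNReal.tsum_le_tsum fun i => ?_
  rw [← add_mul]
  gcongr
  exact le_add_tsub

variable [Nonempty (ProbVec E)]

lemma filterGap_le_two_mul_l1Dist {a b : E → ℝ≥0∞} (ha : mass a ≠ ∞) (hb : mass b ≠ ∞) :
    filterGap (a, b) ≤ 2 * l1Dist a b := by
  set c : E → ℝ≥0∞ := mass a • (toProbVec b).weight with hc
  have hbc : l1Dist b c ≤ l1Dist a b :=
    calc l1Dist b c = l1Dist (mass b • (toProbVec b).weight) c := by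
          rw [mass_smul_weight_toProbVec hb]
      _ = (mass b - mass a) + (mass a - mass b) := by
          rw [hc, l1Dist_smul_smul (a := (toProbVec b).weight) fun i => ofReal_ne_top,
            ProbVec.mass_weight, mul_one, mul_one]
      _ ≤ l1Dist a b := by
          rw [l1Dist_comm]
          exact add_le_add (mass_sub_le b a) (mass_sub_le a b)
  calc filterGap (a, b) = l1Dist a c := by
        rw [filterGap, mul_comm, ← l1Dist_smul ha, mass_smul_weight_toProbVec ha]
    _ ≤ l1Dist a b + l1Dist b c := l1Dist_triangle a b c
    _ ≤ 2 * l1Dist a b := by rw [two_mul]; gcongr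

lemma IsBoundedLipschitz.perspective_le {L : ℝ≥0∞} {f : ProbVec E → ℝ≥0∞}
    (hf : IsBoundedLipschitz L f) {a b : E → ℝ≥0∞} (ha : mass a ≠ ∞) (hb : mass b ≠ ∞) :
    perspective f a ≤ perspective f b + (1 + 2 * L) * l1Dist a b :=
  calc perspective f a
      ≤ f (toProbVec b) * mass a + L * filterGap (a, b) := (hf.mul_mass_le (a, b)).1
    _ ≤ f (toProbVec b) * (mass b + l1Dist a b) + L * (2 * l1Dist a b) := by
        gcongr
        · exact mass_le_add_l1Dist a b
        · exact filterGap_le_two_mul_l1Dist ha hb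
    _ = perspective f b + (f (toProbVec b) + 2 * L) * l1Dist a b := by rw [perspective]; ring
    _ ≤ perspective f b + (1 + 2 * L) * l1Dist a b := by gcongr; exact hf.le_one _

lemma IsTransitionDensity.isBoundedLipschitz_lintegral_filterTransition [Countable E]
    [MeasurableSpace F] {N : F → E → E → ℝ≥0∞} {φ : Measure F} [SigmaFinite φ]
    (h : IsTransitionDensity N φ) {L : ℝ≥0∞} {f : ProbVec E → ℝ≥0∞} (hfm : Measurable f)
    (hf : IsBoundedLipschitz L f) :
    IsBoundedLipschitz (1 + 2 * L) fun α => ∫⁻ β, f β ∂filterTransition N φ α where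
  le_one α := by
    have := h.isMarkovKernel_filterTransition
    exact (lintegral_mono hf.le_one).trans_eq (by simp)
  le_add α β := by
    have hpers : Measurable fun y => perspective f (mix β.weight (N y)) :=
      (measurable_perspective hfm).comp (h.measurable_mix_right _)
    have hmass := h.measurable_mass_mix_right
    have hle : ∀ᵐ y ∂φ, perspective f (mix α.weight (N y)) ≤ perspective f (mix β.weight (N y)) +
        (1 + 2 * L) * (mass (mix (α.weight - β.weight) (N y)) +
          mass (mix (β.weight - α.weight) (N y))) := by
      filter_upwards [h.ae_mass_mix_ne_top α.mass_weight_ne_top,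
        h.ae_mass_mix_ne_top β.mass_weight_ne_top] with y hα hβ
      refine (hf.perspective_le hα hβ).trans ?_
      rw [l1Dist]
      gcongr <;> exact mass_mix_sub_mix_le _ _ _
    have hsum : Measurable fun y => mass (mix (α.weight - β.weight) (N y)) +
        mass (mix (β.weight - α.weight) (N y)) := (hmass _).add (hmass _)
    rw [h.lintegral_filterTransition hfm, h.lintegral_filterTransition hfm]
    refine (lintegral_mono_ae hle).trans_eq ?_
    rw [lintegral_add_left hpers, lintegral_const_mul _ hsum, lintegral_add_left (hmass _),
      h.lintegral_mass_mix, h.lintegral_mass_mix, l1Dist]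

end Feller

section Invariance
variable {E F : Type*} {M : F → E → E → ℝ}

lemma filterStep_eq_of_mul_rowTot {α β : ProbVec E} {y : F}
    (hβ : ∀ j, β.1 j * rowTot (rowMul M α.1 y) = rowMul M α.1 y j)
    (hy : rowTot (rowMul M α.1 y) ≠ 0) : filterStep M α y = β := by
  have hex : ∃ ν : ProbVec E, ∀ j, ν.1 j * rowTot (rowMul M α.1 y) = rowMul M α.1 y j := ⟨β, hβ⟩
  rw [filterStep, dif_pos hex]
  exact Subtype.ext <| funext fun j =>
    mul_right_cancel₀ hy ((hex.choose_spec j).trans (hβ j).symm)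

variable [Nonempty (ProbVec E)]

lemma apply_filterStep_mul_rowTot (hMnn : ∀ y i j, 0 ≤ M y i j) (f : ProbVec E → ℝ) {α : ProbVec E}
    {y : F} (hy : mass (mix α.weight (transitionDensity M y)) ≠ ∞) :
    f (filterStep M α y) * rowTot (rowMul M α.1 y) =
      (mass (mix α.weight (transitionDensity M y))).toReal *
        f (toProbVec (mix α.weight (transitionDensity M y))) := by
  have hrow := rowMul_toReal hMnn hy
  simp only [α.toReal_weight] at hrow
  set a := mix α.weight (transitionDensity M y)
  have htot : rowTot (rowMul M α.1 y) = (mass a).toReal := by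
    rw [hrow, rowTot, mass, ENNReal.tsum_toReal_eq (ENNReal.ne_top_of_tsum_ne_top hy)]
  have hcoord : ∀ j, (toProbVec a).1 j * rowTot (rowMul M α.1 y) = rowMul M α.1 y j := fun j => by
    rw [htot, hrow, mul_comm, ← ProbVec.toReal_weight, ← ENNReal.toReal_mul]
    exact congrArg ENNReal.toReal (congrFun (mass_smul_weight_toProbVec hy) j)
  rcases eq_or_ne (rowTot (rowMul M α.1 y)) 0 with h0 | h0
  · rw [h0, ← htot, h0, mul_zero, zero_mul]
  · rw [filterStep_eq_of_mul_rowTot hcoord h0, htot, mul_comm]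

variable [Countable E] [MeasurableSpace F] {φ : Measure F} [SigmaFinite φ]

lemma IsTransitionDensity.filterKernel_eq_integral
    (h : IsTransitionDensity (transitionDensity M) φ) (hMnn : ∀ y i j, 0 ≤ M y i j)
    {f : ProbVec E → ℝ} (hf : Measurable f) (α : ProbVec E) :
    filterKernel M φ f α = ∫ β, f β ∂filterTransition (transitionDensity M) φ α := by
  have hfin := h.ae_mass_mix_ne_top α.mass_weight_ne_top
  rw [h.filterTransition_apply,
    integral_map (h.measurable_toProbVec_mix_right _).aemeasurable hf.aestronglyMeasurable,
    integral_withDensity_eq_integral_toReal_smul (h.measurable_mass_mix_right _)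
      (hfin.mono fun y hy => hy.lt_top)]
  refine integral_congr_ae ?_
  filter_upwards [hfin] with y hy using apply_filterStep_mul_rowTot hMnn f hy

lemma integral_bind_kernel {X Y : Type*} [MeasurableSpace X] [MeasurableSpace Y] (κ : Kernel X Y)
    [IsSFiniteKernel κ] (μ : Measure X) [SFinite μ] {f : Y → ℝ} (hf : Integrable f (μ.bind κ)) :
    ∫ y, f y ∂μ.bind κ = ∫ x, ∫ y, f y ∂κ x ∂μ := by
  have hcomp := Kernel.integral_comp (κ := Kernel.const Unit μ) (η := κ) (a := ()) (f := f)
  rw [Kernel.comp_apply, Kernel.const_apply] at hcomp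
  exact hcomp hf

lemma IsTransitionDensity.isPiInvariant_iff (h : IsTransitionDensity (transitionDensity M) φ)
    (hMnn : ∀ y i j, 0 ≤ M y i j) (𝕄 : ProbabilityMeasure (ProbVec E)) :
    IsPiInvariant M φ 𝕄 ↔
      (filterTransition (transitionDensity M) φ).Invariant (𝕄 : Measure (ProbVec E)) := by
  set κ := filterTransition (transitionDensity M) φ
  have : IsMarkovKernel κ := h.isMarkovKernel_filterTransition
  have hint : ∀ f : ProbVec E → ℝ, IsBddCont f →
      ∫ α, filterKernel M φ f α ∂𝕄 = ∫ α, f α ∂(𝕄 : Measure (ProbVec E)).bind κ := by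
    rintro f ⟨hf, C, hC⟩
    rw [integral_bind_kernel κ _ (Integrable.of_bound hf.measurable.aestronglyMeasurable C
      (Eventually.of_forall hC))]
    exact integral_congr_ae (Eventually.of_forall (h.filterKernel_eq_integral hMnn hf.measurable))
  refine ⟨fun h𝕄 => ?_, fun h𝕄 f hf => by rw [hint f hf, h𝕄.def]⟩
  let _ := ProbVec.pseudoMetricSpace E
  refine ext_of_forall_integral_eq_of_IsFiniteMeasure fun f => ?_
  have hf : IsBddCont f := ⟨f.continuous, ‖f‖, f.norm_coe_le_norm⟩
  rw [← hint f hf, h𝕄 f hf]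

end Invariance

/-! ### Random probability vectors with a given mean -/

section Tightness
variable {E : Type*}

/-- The mass of `α` outside the finite set `s`. -/
noncomputable def ProbVec.tail (s : Finset E) (α : ProbVec E) : ℝ≥0∞ := 1 - ∑ i ∈ s, α.weight i

lemma ProbVec.sum_weight_le_one (s : Finset E) (α : ProbVec E) : ∑ i ∈ s, α.weight i ≤ 1 :=
  (ENNReal.sum_le_tsum s).trans_eq α.mass_weight

lemma ProbVec.tendsto_tail (α : ProbVec E) : Tendsto (fun s => tail s α) atTop (𝓝 0) := by
  have hsum : Tendsto (fun s => ∑ i ∈ s, α.weight i) atTop (𝓝 1) :=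
    α.mass_weight ▸ ENNReal.summable.hasSum
  simpa [tail] using ENNReal.Tendsto.sub (tendsto_const_nhds (x := 1)) hsum (Or.inl one_ne_top)

lemma hasSum_one_of_forall_one_sub_le {p : E → ℝ} (hp : ∀ i, 0 ≤ p i)
    (hle : ∀ t : Finset E, ∑ i ∈ t, p i ≤ 1) {η : ℕ → ℝ≥0∞} (hη : Tendsto η atTop (𝓝 0))
    {s : ℕ → Finset E} (hs : ∀ k, 1 - ∑ i ∈ s k, ENNReal.ofReal (p i) ≤ η k) : HasSum p 1 := by
  refine hasSum_of_isLUB_of_nonneg _ hp ⟨Set.forall_mem_range.2 hle, fun b hb => ?_⟩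
  have hgap : ∀ k, 1 - ENNReal.ofReal b ≤ η k := fun k => by
    refine (tsub_le_tsub_left ?_ 1).trans (hs k)
    rw [← ENNReal.ofReal_sum_of_nonneg fun i _ => hp i]
    exact ENNReal.ofReal_le_ofReal (hb ⟨s k, rfl⟩)
  exact ENNReal.one_le_ofReal.1 (tsub_eq_zero_iff_le.1 (le_zero_iff.1 (ge_of_tendsto' hη hgap)))

lemma ProbVec.isCompact_setOfPred_tail_le {η : ℕ → ℝ≥0∞} (hη : Tendsto η atTop (𝓝 0))
    (s : ℕ → Finset E) : IsCompact {α : ProbVec E | ∀ k, α.tail (s k) ≤ η k} := by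
  rw [Subtype.isCompact_iff]
  have hsum : ∀ t : Finset E, Continuous fun p : E → ℝ => ∑ i ∈ t, p i := fun t =>
    continuous_finsetSum _ fun i _ => continuous_apply i
  have htail : ∀ t : Finset E,
      Continuous fun p : E → ℝ => 1 - ∑ i ∈ t, ENNReal.ofReal (p i) := fun t =>
    (ENNReal.continuous_sub_left one_ne_top).comp
      (continuous_finsetSum _ fun i _ => ENNReal.continuous_ofReal.comp (continuous_apply i))
  have hclosed : IsClosed ({p : E → ℝ | ∀ t : Finset E, ∑ i ∈ t, p i ≤ 1} ∩
      {p : E → ℝ | ∀ k, 1 - ∑ i ∈ s k, ENNReal.ofReal (p i) ≤ η k}) := by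
    simp only [Set.ofPred_forall]
    exact (isClosed_iInter fun t => isClosed_le (hsum t) continuous_const).inter
      (isClosed_iInter fun k => isClosed_le (htail (s k)) continuous_const)
  convert (isCompact_univ_pi fun _ : E => isCompact_Icc (a := (0 : ℝ)) (b := 1)).inter_right hclosed
  ext p
  constructor
  · rintro ⟨α, hα, rfl⟩
    exact ⟨fun i _ => ⟨α.2.1 i, le_hasSum α.2.2 i fun j _ => α.2.1 j⟩,
      fun t => sum_le_hasSum t (fun j _ => α.2.1 j) α.2.2, hα⟩
  · rintro ⟨hcube, hle, hs⟩
    have hp : ∀ i, 0 ≤ p i := fun i => (hcube i trivial).1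
    exact ⟨⟨p, hp, hasSum_one_of_forall_one_sub_le hp hle hη hs⟩, hs, rfl⟩

lemma measurable_tail (s : Finset E) : Measurable (ProbVec.tail s) :=
  measurable_const.sub (Finset.measurable_fun_sum s fun i _ => measurable_weight_apply i)

lemma HasBarycenter.lintegral_tail {μ : Measure (ProbVec E)} [IsProbabilityMeasure μ]
    {lam : ProbVec E} (hμ : HasBarycenter μ lam) (s : Finset E) :
    ∫⁻ α, α.tail s ∂μ = lam.tail s := by
  have hsum : ∫⁻ α, ∑ i ∈ s, α.weight i ∂μ = ∑ i ∈ s, lam.weight i := by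
    rw [lintegral_finsetSum s fun i _ => measurable_weight_apply i]
    exact Finset.sum_congr rfl fun i _ => hμ i
  simp only [ProbVec.tail]
  rw [lintegral_sub (Finset.measurable_fun_sum s fun i _ => measurable_weight_apply i)
    (by rw [hsum]; exact ne_top_of_le_ne_top one_ne_top (lam.sum_weight_le_one s))
    (Eventually.of_forall fun α => α.sum_weight_le_one s), hsum, lintegral_one, measure_univ]

lemma isTightMeasureSet_setOfPred_hasBarycenter (lam : ProbVec E) :
    IsTightMeasureSet {μ : Measure (ProbVec E) | IsProbabilityMeasure μ ∧ HasBarycenter μ lam} := by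
  rw [isTightMeasureSet_iff_exists_isCompact_measure_compl_le]
  intro ε hε
  obtain ⟨e, he, hsum⟩ := ENNReal.exists_pos_sum_of_countable hε.ne' ℕ
  set η : ℕ → ℝ≥0∞ := fun k => 2⁻¹ ^ k
  have hη : Tendsto η atTop (𝓝 0) :=
    ENNReal.tendsto_pow_atTop_nhds_zero_of_lt_one (ENNReal.inv_lt_one.2 one_lt_two)
  have hη₀ : ∀ k, η k ≠ 0 := fun k => pow_ne_zero k (ENNReal.inv_ne_zero.2 ofNat_ne_top)
  have hη_top : ∀ k, η k ≠ ∞ := fun k => ENNReal.pow_ne_top (ENNReal.inv_ne_top.2 two_ne_zero)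
  have htail : ∀ k, ∃ s : Finset E, lam.tail s ≤ η k * e k := fun k =>
    (ENNReal.tendsto_nhds_zero.1 lam.tendsto_tail _
      (ENNReal.mul_pos (hη₀ k) (coe_ne_zero.2 (he k).ne'))).exists
  choose s hs using htail
  refine ⟨_, ProbVec.isCompact_setOfPred_tail_le hη s, ?_⟩
  rintro μ ⟨_, hμ⟩
  have hcompl : {α : ProbVec E | ∀ k, α.tail (s k) ≤ η k}ᶜ ⊆
      ⋃ k, {α : ProbVec E | η k ≤ α.tail (s k)} := fun α hα => by
    obtain ⟨k, hk⟩ := not_forall.1 hα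
    exact Set.mem_iUnion.2 ⟨k, (not_le.1 hk).le⟩
  have hmarkov : ∀ k, μ {α | η k ≤ α.tail (s k)} ≤ e k := fun k => by
    refine (meas_ge_le_lintegral_div (measurable_tail (s k)).aemeasurable (hη₀ k) (hη_top k)).trans
      (ENNReal.div_le_of_le_mul' ?_)
    rw [hμ.lintegral_tail]
    exact hs k
  calc μ {α | ∀ k, α.tail (s k) ≤ η k}ᶜ
      ≤ ∑' k, μ {α | η k ≤ α.tail (s k)} := (measure_mono hcompl).trans (measure_iUnion_le _)
    _ ≤ ∑' k, (e k : ℝ≥0∞) := ENNReal.tsum_le_tsum hmarkov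
    _ ≤ ε := hsum.le

end Tightness

lemma tendsto_lintegral_of_continuous_of_le {X ι : Type*} [TopologicalSpace X] [MeasurableSpace X]
    [OpensMeasurableSpace X] {l : Filter ι} {μs : ι → ProbabilityMeasure X}
    {μ : ProbabilityMeasure X} (hμ : Tendsto μs l (𝓝 μ)) {f : X → ℝ≥0∞} (hf : Continuous f)
    {C : NNReal} (hC : ∀ x, f x ≤ C) :
    Tendsto (fun i => ∫⁻ x, f x ∂(μs i : Measure X)) l (𝓝 (∫⁻ x, f x ∂(μ : Measure X))) := by
  lift f to X → NNReal using fun x => ne_top_of_le_ne_top coe_ne_top (hC x)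
  have hmem : ∀ x, (f x : ℝ) ∈ Set.Icc (0 : ℝ) C := fun x =>
    ⟨(f x).2, NNReal.coe_le_coe.2 (coe_le_coe.1 (hC x))⟩
  exact ProbabilityMeasure.tendsto_iff_forall_lintegral_tendsto.1 hμ <|
    BoundedContinuousFunction.mkOfBound ⟨f, ENNReal.continuous_coe_iff.1 hf⟩ (C - 0) fun x y =>
      Real.dist_le_of_mem_Icc (hmem x) (hmem y)

/-! ### Invariant measures of the filter -/

section InvariantMeasure
variable {E F : Type*} [MeasurableSpace F]

/-- The transition matrix of the signal: the transition density integrated over the observation. -/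
noncomputable def signalMatrix (N : F → E → E → ℝ≥0∞) (φ : Measure F) : E → E → ℝ≥0∞ :=
  fun i j => ∫⁻ y, N y i j ∂φ

variable {N : F → E → E → ℝ≥0∞} {φ : Measure F}

lemma exists_hasBarycenter [Countable E] (μ : Measure (ProbVec E)) [IsProbabilityMeasure μ] :
    ∃ ρ, HasBarycenter μ ρ := by
  have : Nonempty (ProbVec E) := nonempty_of_isProbabilityMeasure μ
  have hmass : mass (fun i => ∫⁻ α, α.weight i ∂μ) = 1 := by
    rw [mass, ← MeasureTheory.lintegral_tsum fun i => (measurable_weight_apply i).aemeasurable]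
    exact (lintegral_congr fun α => α.mass_weight).trans (by simp)
  exact ⟨_, fun i => (congrFun (weight_toProbVec_of_mass_eq_one hmass) i).symm⟩

namespace IsTransitionDensity
variable [Countable E] (h : IsTransitionDensity N φ)
include h

lemma lintegral_mix (a : E → ℝ≥0∞) (j : E) :
    ∫⁻ y, mix a (N y) j ∂φ = mix a (signalMatrix N φ) j := by
  simp only [mix, signalMatrix]
  rw [MeasureTheory.lintegral_tsum fun i => ((h.measurable i j).const_mul _).aemeasurable]
  exact tsum_congr fun i => lintegral_const_mul _ (h.measurable i j)

variable [SigmaFinite φ] [Nonempty (ProbVec E)]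

lemma lintegral_weight_filterTransition (α : ProbVec E) (j : E) :
    ∫⁻ β, β.weight j ∂filterTransition N φ α = mix α.weight (signalMatrix N φ) j := by
  rw [h.lintegral_filterTransition (measurable_weight_apply j), ← h.lintegral_mix]
  refine lintegral_congr_ae ?_
  filter_upwards [h.ae_mass_mix_ne_top α.mass_weight_ne_top] with y hy
    using perspective_coordinate j hy

lemma lintegral_weight_bind {μ : Measure (ProbVec E)} {ρ : ProbVec E} (hμ : HasBarycenter μ ρ)
    (j : E) :
    ∫⁻ β, β.weight j ∂μ.bind (filterTransition N φ) = mix ρ.weight (signalMatrix N φ) j := by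
  rw [Measure.lintegral_bind (filterTransition N φ).aemeasurable
    (measurable_weight_apply j).aemeasurable,
    lintegral_congr fun α => h.lintegral_weight_filterTransition α j]
  exact hμ.lintegral_tsum _

lemma hasBarycenter_bind {μ : Measure (ProbVec E)} {lam : ProbVec E} (hμ : HasBarycenter μ lam)
    (hlam : mix lam.weight (signalMatrix N φ) = lam.weight) :
    HasBarycenter (μ.bind (filterTransition N φ)) lam := fun j => by
  rw [h.lintegral_weight_bind hμ, hlam]

lemma hasBarycenter_of_invariant {lam : ProbVec E}
    (hlam : ∀ ρ : ProbVec E, mix ρ.weight (signalMatrix N φ) = ρ.weight → ρ = lam)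
    {μ : Measure (ProbVec E)} [IsProbabilityMeasure μ]
    (hμ : (filterTransition N φ).Invariant μ) : HasBarycenter μ lam := by
  obtain ⟨ρ, hρ⟩ := exists_hasBarycenter μ
  have hstat : mix ρ.weight (signalMatrix N φ) = ρ.weight := funext fun j => by
    rw [← h.lintegral_weight_bind hρ, hμ.def, hρ j]
  exact hlam ρ hstat ▸ hρ

lemma hasBarycenter_filterTransition_pow {lam : ProbVec E}
    (hlam : mix lam.weight (signalMatrix N φ) = lam.weight) (n : ℕ) :
    HasBarycenter ((filterTransition N φ ^ n) lam) lam := by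
  induction n with
  | zero => exact fun i => lintegral_pow_zero _ (measurable_weight_apply i) lam
  | succ n ih =>
    rw [add_comm, Kernel.pow_add, Kernel.comp_apply, pow_one]
    exact h.hasBarycenter_bind ih hlam

lemma tendsto_lintegral_filterTransition_pow_iff (hN : PredictionControlsFilter N φ)
    {lam : ProbVec E} {μ : Measure (ProbVec E)} [IsProbabilityMeasure μ] (hμ : HasBarycenter μ lam)
    {L : ℝ≥0∞} (hL : L ≠ ∞) {f : ProbVec E → ℝ≥0∞} (hf : IsBoundedLipschitz L f) {l : Filter ℕ}
    (hl : l ≤ atTop) {c : ℝ≥0∞} :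
    Tendsto (fun n => ∫⁻ α, ∫⁻ β, f β ∂(filterTransition N φ ^ n) α ∂μ) l (𝓝 c) ↔
      Tendsto (fun n => ∫⁻ β, f β ∂(filterTransition N φ ^ n) lam) l (𝓝 c) := by
  have hfm := (hf.continuous hL).measurable
  have hgap : Tendsto (fun n => L * meanFilterGap N φ μ lam n) l (𝓝 0) := by
    simpa using ENNReal.Tendsto.const_mul ((h.tendsto_meanFilterGap hN hμ).mono_left hl)
      (Or.inr hL)
  have hle := fun n => (h.lintegral_filterTransition_pow_le hfm hf n hμ).1
  have hge := fun n => (h.lintegral_filterTransition_pow_le hfm hf n hμ).2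
  exact ⟨fun hc => tendsto_of_le_add_of_le_add hc hgap hle hge,
    fun hc => tendsto_of_le_add_of_le_add hc hgap hge hle⟩

theorem eq_of_invariant (hN : PredictionControlsFilter N φ) {lam : ProbVec E}
    {μ ν : Measure (ProbVec E)} [IsProbabilityMeasure μ] [IsProbabilityMeasure ν]
    (hμ : (filterTransition N φ).Invariant μ) (hμlam : HasBarycenter μ lam)
    (hν : (filterTransition N φ).Invariant ν) (hνlam : HasBarycenter ν lam) : μ = ν := by
  refine ext_of_lintegral_isBoundedLipschitz fun L hL f hf => ?_
  have hlim : ∀ {ρ : Measure (ProbVec E)} [IsProbabilityMeasure ρ],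
      (filterTransition N φ).Invariant ρ → HasBarycenter ρ lam →
        Tendsto (fun n => ∫⁻ β, f β ∂(filterTransition N φ ^ n) lam) atTop
          (𝓝 (∫⁻ α, f α ∂ρ)) := fun hρ hρlam => by
    rw [← h.tendsto_lintegral_filterTransition_pow_iff hN hρlam hL hf le_rfl]
    simp only [lintegral_lintegral_pow_of_invariant hρ (hf.continuous hL).measurable]
    exact tendsto_const_nhds
  exact tendsto_nhds_unique (hlim hμ hμlam) (hlim hν hνlam)

lemma exists_tendsto_filterTransition_pow {lam : ProbVec E}
    (hlam : mix lam.weight (signalMatrix N φ) = lam.weight) :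
    ∃ (μs : ℕ → ProbabilityMeasure (ProbVec E)) (μ : ProbabilityMeasure (ProbVec E))
      (U : Ultrafilter ℕ), (∀ n, (μs n : Measure (ProbVec E)) = (filterTransition N φ ^ n) lam) ∧
        ↑U ≤ (atTop : Filter ℕ) ∧ Tendsto μs U (𝓝 μ) := by
  have := h.isMarkovKernel_filterTransition
  set μs : ℕ → ProbabilityMeasure (ProbVec E) := fun n =>
    ⟨(filterTransition N φ ^ n) lam, (isMarkovKernel_pow _ n).isProbabilityMeasure lam⟩
  have hcompact : IsCompact (closure (Set.range μs)) := by
    refine isCompact_closure_of_isTightMeasureSet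
      ((isTightMeasureSet_setOfPred_hasBarycenter lam).subset ?_)
    rintro _ ⟨_, ⟨n, rfl⟩, rfl⟩
    exact ⟨inferInstance, h.hasBarycenter_filterTransition_pow hlam n⟩
  obtain ⟨μ, -, hμ⟩ := hcompact.exists_mapClusterPt (f := atTop) (u := μs) <|
    tendsto_principal.2 (Eventually.of_forall fun n => subset_closure ⟨n, rfl⟩)
  obtain ⟨U, hU, hlim⟩ := mapClusterPt_iff_ultrafilter.1 hμ
  exact ⟨μs, μ, U, fun _ => rfl, hU, hlim⟩

-- The averages of `f` under `Πⁿ⁺¹δ_λ` are also those of `Πⁿf` under `Πδ_λ`, which has mean `λ`.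
lemma invariant_of_tendsto (hN : PredictionControlsFilter N φ) {lam : ProbVec E}
    (hlam : mix lam.weight (signalMatrix N φ) = lam.weight)
    {μs : ℕ → ProbabilityMeasure (ProbVec E)} {μ : ProbabilityMeasure (ProbVec E)} {l : Filter ℕ}
    [NeBot l] (hl : l ≤ atTop)
    (hμs : ∀ n, (μs n : Measure (ProbVec E)) = (filterTransition N φ ^ n) lam)
    (hμ : Tendsto μs l (𝓝 μ)) : (filterTransition N φ).Invariant (μ : Measure (ProbVec E)) := by
  set κ := filterTransition N φ
  have : IsMarkovKernel κ := h.isMarkovKernel_filterTransition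
  refine ext_of_lintegral_isBoundedLipschitz fun L hL f hf => ?_
  have hfm : Measurable f := (hf.continuous hL).measurable
  have hκf := h.isBoundedLipschitz_lintegral_filterTransition hfm hf
  have hL' : 1 + 2 * L ≠ ∞ := add_ne_top.2 ⟨one_ne_top, mul_ne_top ofNat_ne_top hL⟩
  have hlim : ∀ {K : ℝ≥0∞} {g : ProbVec E → ℝ≥0∞}, K ≠ ∞ → IsBoundedLipschitz K g →
      Tendsto (fun n => ∫⁻ α, g α ∂(κ ^ n) lam) l (𝓝 (∫⁻ α, g α ∂(μ : Measure (ProbVec E)))) :=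
    fun hK hg => by
      simpa only [hμs] using
        tendsto_lintegral_of_continuous_of_le hμ (hg.continuous hK) (C := 1) hg.le_one
  have hbary : HasBarycenter (κ lam) lam := by
    simpa only [pow_one] using h.hasBarycenter_filterTransition_pow hlam 1
  have hshift : ∀ n, ∫⁻ α, ∫⁻ β, f β ∂(κ ^ n) α ∂κ lam = ∫⁻ α, ∫⁻ β, f β ∂κ α ∂(κ ^ n) lam :=
    fun n => by
      have hsplit := lintegral_pow_add κ n 1 hfm lam
      rw [add_comm, lintegral_pow_add κ 1 n hfm] at hsplit
      simpa only [pow_one] using hsplit.symm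
  have hmerge := (h.tendsto_lintegral_filterTransition_pow_iff hN hbary hL hf hl).2 (hlim hL hf)
  rw [Measure.lintegral_bind κ.aemeasurable hfm.aemeasurable]
  exact tendsto_nhds_unique (hlim hL' hκf) (hmerge.congr hshift)

theorem existsUnique_invariant (hN : PredictionControlsFilter N φ) {lam : ProbVec E}
    (hlam : mix lam.weight (signalMatrix N φ) = lam.weight)
    (hlamUniq : ∀ ρ : ProbVec E, mix ρ.weight (signalMatrix N φ) = ρ.weight → ρ = lam) :
    ∃! 𝕄 : ProbabilityMeasure (ProbVec E),
      (filterTransition N φ).Invariant (𝕄 : Measure (ProbVec E)) := by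
  obtain ⟨μs, 𝕄, U, hμs, hU, hlim⟩ := h.exists_tendsto_filterTransition_pow hlam
  have h𝕄 := h.invariant_of_tendsto hN hlam hU hμs hlim
  exact ⟨𝕄, h𝕄, fun 𝕄' h𝕄' => ProbabilityMeasure.toMeasure_injective <|
    h.eq_of_invariant hN h𝕄' (h.hasBarycenter_of_invariant hlamUniq h𝕄')
      h𝕄 (h.hasBarycenter_of_invariant hlamUniq h𝕄)⟩

end IsTransitionDensity
end InvariantMeasure

section Stationarity
variable {E F : Type*} [MeasurableSpace F] {M : F → E → E → ℝ} {φ : Measure F}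

lemma IsTransitionDensity.toReal_mix_signalMatrix
    (h : IsTransitionDensity (transitionDensity M) φ) (hMnn : ∀ y i j, 0 ≤ M y i j)
    (hMmeas : ∀ i j, Measurable fun y => M y i j) (ρ : ProbVec E) (j : E) :
    (mix ρ.weight (signalMatrix (transitionDensity M) φ) j).toReal =
      ∑' i, ρ.1 i * transMat M φ i j := by
  have hterm : ∀ i, ρ.weight i * signalMatrix (transitionDensity M) φ i j ≠ ∞ := fun i => by
    rw [signalMatrix, h.lintegral_transitionDensity hMnn hMmeas]
    exact mul_ne_top ofReal_ne_top ofReal_ne_top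
  rw [mix, ENNReal.tsum_toReal_eq hterm]
  refine tsum_congr fun i => ?_
  rw [toReal_mul, ρ.toReal_weight, signalMatrix, h.lintegral_transitionDensity hMnn hMmeas,
    toReal_ofReal (show 0 ≤ transMat M φ i j from integral_nonneg fun y => hMnn y i j)]

lemma IsTransitionDensity.mix_signalMatrix_eq_weight_iff [Countable E]
    (h : IsTransitionDensity (transitionDensity M) φ) (hMnn : ∀ y i j, 0 ≤ M y i j)
    (hMmeas : ∀ i j, Measurable fun y => M y i j) (ρ : ProbVec E) :
    mix ρ.weight (signalMatrix (transitionDensity M) φ) = ρ.weight ↔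
      ∀ j, ∑' i, ρ.1 i * transMat M φ i j = ρ.1 j := by
  have hle : ∀ j, mix ρ.weight (signalMatrix (transitionDensity M) φ) j ≤ 1 := fun j => by
    rw [← h.lintegral_mix, ← ρ.mass_weight, ← h.lintegral_mass_mix]
    exact lintegral_mono fun y => ENNReal.le_tsum j
  rw [funext_iff]
  refine forall_congr' fun j => ?_
  rw [← ENNReal.toReal_eq_toReal_iff' (ne_top_of_le_ne_top one_ne_top (hle j))
      (y := ρ.weight j) ofReal_ne_top,
    h.toReal_mix_signalMatrix hMnn hMmeas, ρ.toReal_weight]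

end Stationarity

theorem unique_invariant_measure_of_uniform_observability_general
    {E : Type*} [Countable E] {F : Type*} [MeasurableSpace F]
    (φ : Measure F) [SigmaFinite φ]
    (M : F → E → E → ℝ)
    (hMmeas : ∀ i j, Measurable fun y => M y i j)
    (hMnn : ∀ y i j, 0 ≤ M y i j)
    (hMbd : ∀ᵐ y ∂φ, ∃ C : ℝ, ∀ (i : E) (s : Finset E), ∑ j ∈ s, M y i j ≤ C)
    (lam : ProbVec E)
    (hlamInv : ∀ j, ∑' i, (lam : E → ℝ) i * transMat M φ i j = (lam : E → ℝ) j)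
    (hlamUniq : ∀ ρ : ProbVec E,
      (∀ j, ∑' i, (ρ : E → ℝ) i * transMat M φ i j = (ρ : E → ℝ) j) → ρ = lam)
    (Q : ProbVec E → Measure (ℕ → F))
    (hQprob : ∀ μ, IsProbabilityMeasure (Q μ))
    (hQ : ∀ (μ : ProbVec E) (n : ℕ) (A : Set (Fin n → F)), MeasurableSet A →
      Q μ {y : ℕ → F | (fun k : Fin n => y k) ∈ A} =
        ∫⁻ v in A, ENNReal.ofReal (rowTot (rowIter M (μ : E → ℝ) (List.ofFn v)))
          ∂(Measure.pi fun _ => φ))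
    (hUO : ∀ ε : ℝ, 0 < ε → ∃ δ : ℝ, 0 < δ ∧ ∀ μ ν : ProbVec E,
      tvMeasure (Q μ) (Q ν) < ENNReal.ofReal δ → tvDist μ ν < ε) :
    ∃! 𝕄 : ProbabilityMeasure (ProbVec E), IsPiInvariant M φ 𝕄 := by
  have : Nonempty (ProbVec E) := ⟨lam⟩
  have hlaw := isObservationLaw_transitionDensity hMnn hMbd hQprob hQ
  have h := hlaw.isTransitionDensity (measurable_transitionDensity hMmeas)
  have hstat := h.mix_signalMatrix_eq_weight_iff hMnn hMmeas
  simpa only [h.isPiInvariant_iff hMnn] using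
    h.existsUnique_invariant (hlaw.predictionControlsFilter h hUO) ((hstat lam).2 hlamInv)
      fun ρ hρ => hlamUniq ρ ((hstat ρ).1 hρ)

/-- If the uniform observability condition (UO) holds, then the filter transition
kernel `Π` admits a unique invariant probability measure. -/
theorem unique_invariant_measure_of_uniform_observability
    {E : Type*} [Countable E] [Nonempty E] [DecidableEq E]
    {F : Type*} [TopologicalSpace F] [PolishSpace F] [MeasurableSpace F] [BorelSpace F]
    (φ : Measure F) [SigmaFinite φ]
    (M : F → E → E → ℝ)
    (hMmeas : ∀ i j, Measurable fun y => M y i j)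
    (hMnn : ∀ y i j, 0 ≤ M y i j)
    (hMbd : ∀ᵐ y ∂φ, ∃ C : ℝ, ∀ (i : E) (s : Finset E), ∑ j ∈ s, M y i j ≤ C)
    (hPtrans : ∀ i, HasSum (fun j => transMat M φ i j) 1)
    (hPirr : ∀ i j : E, ∃ n : ℕ, 0 < matPow (transMat M φ) n i j)
    (lam : ProbVec E)
    (hlamInv : ∀ j, ∑' i, (lam : E → ℝ) i * transMat M φ i j = (lam : E → ℝ) j)
    (hlamUniq : ∀ ρ : ProbVec E,
      (∀ j, ∑' i, (ρ : E → ℝ) i * transMat M φ i j = (ρ : E → ℝ) j) → ρ = lam)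
    (Q : ProbVec E → Measure (ℕ → F))
    (hQprob : ∀ μ, IsProbabilityMeasure (Q μ))
    (hQ : ∀ (μ : ProbVec E) (n : ℕ) (A : Set (Fin n → F)), MeasurableSet A →
      Q μ {y : ℕ → F | (fun k : Fin n => y k) ∈ A} =
        ∫⁻ v in A, ENNReal.ofReal (rowTot (rowIter M (μ : E → ℝ) (List.ofFn v)))
          ∂(Measure.pi fun _ => φ))
    (hUO : ∀ ε : ℝ, 0 < ε → ∃ δ : ℝ, 0 < δ ∧ ∀ μ ν : ProbVec E,
      tvMeasure (Q μ) (Q ν) < ENNReal.ofReal δ → tvDist μ ν < ε) :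
    ∃! 𝕄 : ProbabilityMeasure (ProbVec E), IsPiInvariant M φ 𝕄 :=
  unique_invariant_measure_of_uniform_observability_general φ M hMmeas hMnn hMbd lam hlamInv
    hlamUniq Q hQprob hQ hUO
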